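/- arXiv:1203.5245 — 9 statements merged into one kernel-verified Lean document; each statement's English description precedes it below -/
import Mathlib

section
/- Let (E,𝓔) be a measurable space, Ω = E^ℕ with the product σ-field 𝓕, X_i the i-th coordinate projection, and for a probability measure P on Ω write P₁ = P∘X₁⁻¹ for its first marginal and m̂_n(x) = (1/n)∑_{i=1}^n δ_{x_i} for the empirical measure of x ∈ Ω. Let 𝓟 be a class of probability measures on (Ω,𝓕) each having identical marginals, 𝓜 a set of probability measures on E containing all marginals P₁ (P ∈ 𝓟) and all empirical measures, d a metric on 𝓜, (𝕋,d_𝕋) a complete separable metric space with Borel σ-field, and T : 𝓜 → 𝕋 such that T̂_n(x) := T(m̂_n(x)) is measurable for every n and x ↦ d(m̂_n(x),P₁) is measurable for every P ∈ 𝓟. Assume 𝓟 admits the UGC property w.r.t. d, i.e. for every δ > 0, sup_{Q∈𝓟} Q[d(m̂_n,Q₁) ≥ δ] → 0 as n → ∞. Fix P ∈ 𝓟 and assume T is continuous at P₁ w.r.t. (d,d_𝕋). Then the sequence (T̂_n) is qualitatively 𝓟-marginally robust at P w.r.t. (d, d'_Proh): for every ε > 0 there exist δ > 0 and n₀ ∈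 ℕ such that for every Q ∈ 𝓟 with d(P₁,Q₁) ≤ δ and every n ≥ n₀ one has d'_Proh(P∘T̂_n⁻¹, Q∘T̂_n⁻¹) ≤ ε, where d'_Proh denotes the Prohorov metric on probability measures on 𝕋. -/
open MeasureTheory Filter Topology

/-- The empirical probability measure of the first `n` coordinates of `x`. -/
noncomputable def empMeas {E : Type*} [MeasurableSpace E] (n : ℕ) (x : ℕ → E) :
    Measure E :=
  (n : ENNReal)⁻¹ • ∑ i ∈ Finset.range n, Measure.dirac (x i)

/-- The (one-sided) Prohorov distance between two measures on a metric space: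
`inf {ε > 0 : μ[A] ≤ ν[A^ε] + ε for all Borel A}`, where `A^ε` is the closed
`ε`-hull of `A`. -/
noncomputable def prohorovDist {T : Type*} [MetricSpace T] [MeasurableSpace T]
    (μ ν : Measure T) : ℝ :=
  sInf {ε : ℝ | 0 < ε ∧ ∀ A : Set T, MeasurableSet A →
    (μ A).toReal ≤ (ν (Metric.cthickening ε A)).toReal + ε}

/-- **Hampel-type theorem** (Theorem 2.4): if the class `Ps` admits the UGC property w.r.t. `d`
and the statistical functional `T` is continuous at the marginal `P₁` w.r.t. `(d, d_𝕋)`, then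
the sequence of plug-in estimators `T̂ₙ` is qualitatively `Ps`-marginally robust at `P` w.r.t.
`(d, d'_Proh)`. -/
theorem hampel_type_theorem
    {E : Type*} [MeasurableSpace E]
    {T : Type*} [MetricSpace T] [CompleteSpace T] [TopologicalSpace.SeparableSpace T]
    [MeasurableSpace T] [BorelSpace T]
    -- the class Ps of admissible laws on Ω = E^ℕ, with identical marginals
    (Ps : Set (Measure (ℕ → E)))
    (hprob : ∀ P ∈ Ps, IsProbabilityMeasure P)
    (hident : ∀ P ∈ Ps, ∀ i : ℕ, P.map (fun x => x i) = P.map (fun x => x 0))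
    -- the class Ms of probability measures on E, containing marginals and empirical measures
    (Ms : Set (Measure E))
    (hmarg : ∀ P ∈ Ps, P.map (fun x => x 0) ∈ Ms)
    (hemp : ∀ n : ℕ, 1 ≤ n → ∀ x : ℕ → E, empMeas n x ∈ Ms)
    -- d is a metric on Ms
    (d : Measure E → Measure E → ℝ)
    (hd_nonneg : ∀ μ ∈ Ms, ∀ ν ∈ Ms, 0 ≤ d μ ν)
    (hd_symm : ∀ μ ∈ Ms, ∀ ν ∈ Ms, d μ ν = d ν μ)
    (hd_triangle : ∀ μ ∈ Ms, ∀ ν ∈ Ms, ∀ ρ ∈ Ms, d μ ρ ≤ d μ ν + d ν ρ)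
    (hd_eq : ∀ μ ∈ Ms, ∀ ν ∈ Ms, (d μ ν = 0 ↔ μ = ν))
    -- the statistical functional and the required measurability
    (Tf : Measure E → T)
    (hTmeas : ∀ n : ℕ, Measurable fun x : ℕ → E => Tf (empMeas n x))
    (hdmeas : ∀ P ∈ Ps, ∀ n : ℕ,
      Measurable fun x : ℕ → E => d (empMeas n x) (P.map (fun y => y 0)))
    -- the UGC property of Ps w.r.t. d
    (hUGC : ∀ δ : ℝ, 0 < δ →
      Tendsto (fun n : ℕ => ⨆ Q ∈ Ps,
          Q {x : ℕ → E | δ ≤ d (empMeas n x) (Measure.map (fun y => y 0) Q)})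
        atTop (nhds 0))
    -- a fixed P ∈ Ps at which T is continuous w.r.t. (d, d_𝕋)
    (P : Measure (ℕ → E)) (hP : P ∈ Ps)
    (hcont : ∀ ε : ℝ, 0 < ε → ∃ δ : ℝ, 0 < δ ∧ ∀ ν ∈ Ms,
      d (P.map (fun y => y 0)) ν ≤ δ → dist (Tf (P.map (fun y => y 0))) (Tf ν) ≤ ε) :
    -- qualitative Ps-marginal robustness at P w.r.t. (d, d'_Proh)
    ∀ ε : ℝ, 0 < ε → ∃ δ : ℝ, 0 < δ ∧ ∃ n₀ : ℕ, ∀ Q ∈ Ps,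
      d (P.map (fun y => y 0)) (Q.map (fun y => y 0)) ≤ δ →
      ∀ n ≥ n₀, prohorovDist
          (P.map (fun x : ℕ → E => Tf (empMeas n x)))
          (Q.map (fun x : ℕ → E => Tf (empMeas n x))) ≤ ε := by
  intro ε hε
  obtain ⟨δ, hδ, hδT⟩ := hcont (ε / 2) (by positivity)
  have hev := (ENNReal.tendsto_nhds_zero.1 (hUGC (δ / 2) (by positivity)))
    (ENNReal.ofReal (ε / 2)) (by simpa using hε)
  obtain ⟨N, hN⟩ := eventually_atTop.1 hev
  -- both laws put mass at least `1 - ε / 2` on a small ball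
  have key : ∀ Q ∈ Ps, d (P.map (fun y => y 0)) (Q.map (fun y => y 0)) ≤ δ / 2 →
      ∀ n ≥ max N 1, (Q.map (fun x : ℕ → E => Tf (empMeas n x))).real
        (Metric.closedBall (Tf (P.map (fun y => y 0))) (ε / 2))ᶜ ≤ ε / 2 := by
    intro Q hQ hPQ n hn
    have hnN : N ≤ n := le_trans (le_max_left _ _) hn
    have hn1 : 1 ≤ n := le_trans (le_max_right _ _) hn
    refine ENNReal.toReal_le_of_le_ofReal (by positivity) ?_
    rw [Measure.map_apply (hTmeas n) Metric.isClosed_closedBall.measurableSet.compl]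
    refine le_trans (measure_mono ?_) (le_trans
      (le_iSup₂ (f := fun (Q : Measure (ℕ → E)) (_ : Q ∈ Ps) =>
        Q {x : ℕ → E | δ / 2 ≤ d (empMeas n x) (Measure.map (fun y => y 0) Q)}) Q hQ) (hN n hnN))
    intro x hx
    by_contra hlt
    simp only [Set.mem_setOf_eq, not_le] at hlt
    apply hx
    rw [Metric.mem_closedBall, dist_comm]
    apply hδT _ (hemp n hn1 x)
    have h1 := hd_triangle _ (hmarg P hP) _ (hmarg Q hQ) _ (hemp n hn1 x)
    have h2 := hd_symm _ (hmarg Q hQ) _ (hemp n hn1 x)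
    linarith
  refine ⟨δ / 2, by positivity, max N 1, fun Q hQ hPQ n hn => ?_⟩
  have hPP : d (P.map (fun y => y 0)) (P.map (fun y => y 0)) ≤ δ / 2 := by
    rw [(hd_eq _ (hmarg P hP) _ (hmarg P hP)).2 rfl]
    positivity
  have kP := key P hP hPP n hn
  have kQ := key Q hQ hPQ n hn
  have := hprob P hP
  have := hprob Q hQ
  have : IsProbabilityMeasure (P.map (fun x : ℕ → E => Tf (empMeas n x))) :=
    Measure.isProbabilityMeasure_map (hTmeas n).aemeasurable
  have : IsProbabilityMeasure (Q.map (fun x : ℕ → E => Tf (empMeas n x))) :=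
    Measure.isProbabilityMeasure_map (hTmeas n).aemeasurable
  generalize P.map (fun x : ℕ → E => Tf (empMeas n x)) = μ at *
  generalize Q.map (fun x : ℕ → E => Tf (empMeas n x)) = ν at *
  refine csInf_le ⟨0, fun y hy => hy.1.le⟩ ⟨hε, fun A hA => ?_⟩
  change μ.real A ≤ ν.real _ + ε
  by_cases h : ∃ a ∈ A, a ∈ Metric.closedBall (Tf (P.map (fun y => y 0))) (ε / 2)
  · obtain ⟨a, haA, ha⟩ := h
    have hsub : Metric.closedBall (Tf (P.map (fun y => y 0))) (ε / 2)
        ⊆ Metric.cthickening ε A := by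
      intro z hz
      refine Metric.mem_cthickening_of_dist_le z a ε A haA ?_
      rw [Metric.mem_closedBall] at ha hz
      linarith [dist_triangle_right z a (Tf (P.map (fun y => y 0)))]
    have h1 : ν.real (Metric.closedBall (Tf (P.map (fun y => y 0))) (ε / 2)) ≤
        ν.real (Metric.cthickening ε A) := measureReal_mono hsub
    rw [probReal_compl_eq_one_sub Metric.isClosed_closedBall.measurableSet] at kQ
    have h2 : μ.real A ≤ 1 := measureReal_le_one
    linarith
  · have h1 : μ.real A ≤ μ.real (Metric.closedBall (Tf (P.map (fun y => y 0))) (ε / 2))ᶜ :=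
      measureReal_mono fun a ha hb => h ⟨a, ha, hb⟩
    have h2 : 0 ≤ ν.real (Metric.cthickening ε A) := measureReal_nonneg
    linarith
end

section
/- Let (E,𝓔) be a measurable space, Ω = E^ℕ with the product σ-field 𝓕, X_i the i-th coordinate projection, P₁ = P∘X₁⁻¹ the first marginal of a probability measure P on Ω, and m̂_n(x) = (1/n)∑_{i=1}^n δ_{x_i}. Let 𝓟 be a class of probability measures on (Ω,𝓕) each with identical marginals, 𝓟₁ = {P₁ : P ∈ 𝓟}, 𝓜 ⊇ 𝓟₁ a set of probability measures on E containing all empirical measures, d a metric on 𝓜, (𝕋,d_𝕋) a complete separable metric space, T : 𝓜 → 𝕋 with T̂_n(x) := T(m̂_n(x)) measurable. Fix P ∈ 𝓟 and assume (T̂_n) is weakly consistent w.r.t. d_𝕋 at every Q ∈ 𝓟 for which Q₁ lies in some d-neighborhood of P₁, i.e. T̂_n converges in Q-probability to T(Q₁) w.r.t. d_𝕋 for all such Q. If (T̂_n) is qualitatively 𝓟-marginally robust at P w.r.t. (d, d'_Proh) — i.e. for every ε > 0 there exist δ > 0 and n₀ with d'_Proh(P∘T̂_n⁻¹, Q∘T̂_n⁻¹)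 ≤ ε for all Q ∈ 𝓟 with d(P₁,Q₁) ≤ δ and all n ≥ n₀ — then T is 𝓟₁-continuous at P₁ w.r.t. (d,d_𝕋): for every ε > 0 there is δ > 0 such that d_𝕋(T(P₁),T(ν)) ≤ ε for every ν ∈ 𝓟₁ with d(P₁,ν) ≤ δ. -/
open MeasureTheory Filter Topology

/-- **Converse of Hampel's theorem** (Remark 2.5): if the plug-in estimators are weakly
consistent at every `Q ∈ 𝓟` whose marginal lies in some `d`-neighborhood of `P₁`, then
qualitative `𝓟`-marginal robustness at `P` implies `𝓟₁`-continuity of `T` at `P₁`. -/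
theorem hampel_converse
    {E : Type*} [MeasurableSpace E]
    {T : Type*} [MetricSpace T] [CompleteSpace T] [TopologicalSpace.SeparableSpace T]
    [MeasurableSpace T] [BorelSpace T]
    (Ps : Set (Measure (ℕ → E)))
    (hprob : ∀ P ∈ Ps, IsProbabilityMeasure P)
    (hident : ∀ P ∈ Ps, ∀ i : ℕ, P.map (fun x => x i) = P.map (fun x => x 0))
    (Ms : Set (Measure E))
    (hmarg : ∀ P ∈ Ps, P.map (fun x => x 0) ∈ Ms)
    (hemp : ∀ n : ℕ, 1 ≤ n → ∀ x : ℕ → E, empMeas n x ∈ Ms)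
    (d : Measure E → Measure E → ℝ)
    (hd_nonneg : ∀ μ ∈ Ms, ∀ ν ∈ Ms, 0 ≤ d μ ν)
    (hd_symm : ∀ μ ∈ Ms, ∀ ν ∈ Ms, d μ ν = d ν μ)
    (hd_triangle : ∀ μ ∈ Ms, ∀ ν ∈ Ms, ∀ ρ ∈ Ms, d μ ρ ≤ d μ ν + d ν ρ)
    (hd_eq : ∀ μ ∈ Ms, ∀ ν ∈ Ms, (d μ ν = 0 ↔ μ = ν))
    (Tf : Measure E → T)
    (hTmeas : ∀ n : ℕ, Measurable fun x : ℕ → E => Tf (empMeas n x))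
    (P : Measure (ℕ → E)) (hP : P ∈ Ps)
    -- weak consistency w.r.t. d_𝕋 at every Q ∈ 𝓟 with Q₁ in some d-neighborhood of P₁
    (hconsist : ∃ r : ℝ, 0 < r ∧ ∀ Q ∈ Ps,
      d (P.map (fun y => y 0)) (Q.map (fun y => y 0)) < r →
      ∀ ε : ℝ, 0 < ε →
        Tendsto (fun n : ℕ =>
            Q {x : ℕ → E | ε ≤ dist (Tf (empMeas n x)) (Tf (Measure.map (fun y => y 0) Q))})
          atTop (nhds 0))
    -- qualitative 𝓟-marginal robustness at P w.r.t. (d, d'_Proh)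
    (hrobust : ∀ ε : ℝ, 0 < ε → ∃ δ : ℝ, 0 < δ ∧ ∃ n₀ : ℕ, ∀ Q ∈ Ps,
      d (P.map (fun y => y 0)) (Q.map (fun y => y 0)) ≤ δ →
      ∀ n ≥ n₀, prohorovDist
          (P.map (fun x : ℕ → E => Tf (empMeas n x)))
          (Q.map (fun x : ℕ → E => Tf (empMeas n x))) ≤ ε) :
    -- 𝓟₁-continuity of T at P₁ w.r.t. (d, d_𝕋)
    ∀ ε : ℝ, 0 < ε → ∃ δ : ℝ, 0 < δ ∧ ∀ ν : Measure E, (∃ Q ∈ Ps, ν = Q.map (fun y => y 0)) →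
      d (P.map (fun y => y 0)) ν ≤ δ → dist (Tf (P.map (fun y => y 0))) (Tf ν) ≤ ε := by
  intro ε hε
  obtain ⟨r, hr, hcons⟩ := hconsist
  obtain ⟨η, hη, hη4, hη8⟩ : ∃ η : ℝ, 0 < η ∧ 4 * η ≤ ε ∧ η ≤ 1 / 8 := by
    refine ⟨min (ε / 4) (1 / 8), by positivity, ?_, min_le_right _ _⟩
    have := min_le_left (ε / 4) (1 / 8)
    linarith
  obtain ⟨δ, hδ, n₀, hrob⟩ := hrobust η hη
  refine ⟨min δ (r / 2), by positivity, ?_⟩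
  rintro ν ⟨Q, hQ, rfl⟩ hd
  have hPP : d (P.map (fun y => y 0)) (P.map (fun y => y 0)) < r := by
    rw [(hd_eq _ (hmarg P hP) _ (hmarg P hP)).2 rfl]; exact hr
  have hPQ : d (P.map (fun y => y 0)) (Q.map (fun y => y 0)) < r := by
    have := min_le_right δ (r / 2)
    linarith
  have hc1 := hcons P hP hPP η hη
  have hc2 := hcons Q hQ hPQ η hη
  have := hprob P hP
  have := hprob Q hQ
  have hq : (0 : ENNReal) < ENNReal.ofReal (1 / 4) := by
    rw [ENNReal.ofReal_pos]; norm_num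
  obtain ⟨n, ⟨h1, h2⟩, hn⟩ := (((hc1.eventually (gt_mem_nhds hq)).and
    (hc2.eventually (gt_mem_nhds hq))).and (eventually_ge_atTop n₀)).exists
  have hpro := hrob Q hQ (hd.trans (min_le_left _ _)) n hn
  have hmP : IsProbabilityMeasure (P.map (fun x : ℕ → E => Tf (empMeas n x))) :=
    Measure.isProbabilityMeasure_map (hTmeas n).aemeasurable
  have hlt : prohorovDist (P.map (fun x : ℕ → E => Tf (empMeas n x)))
      (Q.map (fun x : ℕ → E => Tf (empMeas n x))) < 2 * η := by linarith
  unfold prohorovDist at hlt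
  obtain ⟨η', ⟨hη'0, hη'⟩, hη'lt⟩ := exists_lt_of_csInf_lt (by exact ⟨1, one_pos, fun A hA => by
    have h : ((P.map (fun x : ℕ → E => Tf (empMeas n x))) A).toReal ≤ 1 :=
      measureReal_le_one
    have h' : 0 ≤ ((Q.map (fun x : ℕ → E => Tf (empMeas n x)))
      (Metric.cthickening 1 A)).toReal := ENNReal.toReal_nonneg
    linarith⟩) hlt
  have hA := hη' (Metric.ball (Tf (P.map (fun y => y 0))) η) Metric.isOpen_ball.measurableSet
  rw [Measure.map_apply (hTmeas n) Metric.isOpen_ball.measurableSet,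
    Measure.map_apply (hTmeas n) Metric.isClosed_cthickening.measurableSet] at hA
  set B : Set (ℕ → E) := {x | η ≤ dist (Tf (empMeas n x)) (Tf (P.map (fun y => y 0)))} with hB
  set C : Set (ℕ → E) := {x | η ≤ dist (Tf (empMeas n x)) (Tf (Q.map (fun y => y 0)))} with hC
  have hBr : P.real B < 1 / 4 := by
    have := (ENNReal.lt_ofReal_iff_toReal_lt (measure_ne_top P B)).1 h1
    exact this
  have hCr : Q.real C < 1 / 4 := by
    have := (ENNReal.lt_ofReal_iff_toReal_lt (measure_ne_top Q C)).1 h2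
    exact this
  have hBm : MeasurableSet B :=
    (hTmeas n) (isClosed_le continuous_const
      (continuous_id.dist continuous_const) : IsClosed {t : T | η ≤ dist t _}).measurableSet
  have hpre : (fun x : ℕ → E => Tf (empMeas n x)) ⁻¹'
      Metric.ball (Tf (P.map (fun y => y 0))) η = Bᶜ := by
    ext x; simp [hB]
  rw [hpre] at hA
  have hBc : P.real Bᶜ = 1 - P.real B := probReal_compl_eq_one_sub hBm
  change P.real Bᶜ ≤ Q.real _ + η' at hA
  have hnot : ¬ ((fun x : ℕ → E => Tf (empMeas n x)) ⁻¹'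
      Metric.cthickening η' (Metric.ball (Tf (P.map (fun y => y 0))) η) ⊆ C) := by
    intro hsub
    have := measureReal_mono (μ := Q) hsub
    linarith
  obtain ⟨x, hx, hxC⟩ := Set.not_subset.1 hnot
  have hxC' : dist (Tf (empMeas n x)) (Tf (Q.map (fun y => y 0))) < η := by
    simpa [hC] using hxC
  have hx' := Metric.cthickening_subset_thickening' (by linarith : 0 < 2 * η) hη'lt _ hx
  obtain ⟨z, hz, hxz⟩ := Metric.mem_thickening_iff.1 hx'
  rw [Metric.mem_ball] at hz
  have t1 := dist_triangle (Tf (P.map (fun y => y 0))) z (Tf (Q.map (fun y => y 0)))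
  have t2 := dist_triangle z (Tf (empMeas n x)) (Tf (Q.map (fun y => y 0)))
  rw [dist_comm] at hz
  rw [dist_comm] at hxz
  linarith
end

section
/- Let Ω = ℝ^ℕ with the product σ-field 𝓕, X_i the i-th coordinate projection, and for a probability measure P on Ω let P₁ = P∘X₁⁻¹ and m̂_n = (1/n)∑_{i=1}^n δ_{X_i}. Let 𝓟 be a class of probability measures on (Ω,𝓕) such that (a) under every P ∈ 𝓟 all marginals coincide, and (c) lim_{n→∞} sup_{P∈𝓟} α_P(n) = 0, where α_P(n) is the n-th strong mixing coefficient of the coordinate process under P. Then for every δ > 0, lim_{n→∞} sup_{P∈𝓟} P[ d_Lévy(m̂_n, P₁) ≥ δ ] = 0, where d_Lévy is the Lévy metric. -/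
open MeasureTheory Filter Topology

/-- The `n`-th strong mixing (α-mixing) coefficient of a sequence `ξ` under `P`. -/
noncomputable def mixingCoef {Ω E : Type*} [MeasurableSpace Ω] [MeasurableSpace E]
    (P : Measure Ω) (ξ : ℕ → Ω → E) (n : ℕ) : ℝ :=
  sSup {r : ℝ | ∃ k : ℕ, ∃ A B : Set Ω,
    MeasurableSet[⨆ i ∈ Set.Iic k, MeasurableSpace.comap (ξ i) inferInstance] A ∧
    MeasurableSet[⨆ i ∈ Set.Ici (k + n), MeasurableSpace.comap (ξ i) inferInstance] B ∧
    r = |(P (A ∩ B)).toReal - (P A).toReal * (P B).toReal|}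

/-- The distribution function of a measure on `ℝ`. -/
noncomputable def cdfR (μ : Measure ℝ) (y : ℝ) : ℝ := (μ (Set.Iic y)).toReal

/-- The Lévy distance between two probability measures on `ℝ`:
`inf {ε > 0 : F_μ(x−ε) − ε ≤ F_ν(x) ≤ F_μ(x+ε) + ε for all x}`. -/
noncomputable def dLevy (μ ν : Measure ℝ) : ℝ :=
  sInf {ε : ℝ | 0 < ε ∧ ∀ x : ℝ,
    cdfR μ (x - ε) - ε ≤ cdfR ν x ∧ cdfR ν x ≤ cdfR μ (x + ε) + ε}

lemma mix_le (P : Measure (ℕ → ℝ)) [IsProbabilityMeasure P] (n i j : ℕ) (hij : i + n ≤ j)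
    (A : Set ℝ) (hA : MeasurableSet A) :
    |P.real ({x | x i ∈ A} ∩ {x | x j ∈ A}) - P.real {x | x i ∈ A} * P.real {x | x j ∈ A}|
      ≤ mixingCoef P (fun i x => x i) n := by
  unfold mixingCoef
  apply le_csSup
  · refine ⟨1, ?_⟩
    rintro r ⟨k, U, V, -, -, rfl⟩
    change |P.real (U ∩ V) - P.real U * P.real V| ≤ 1
    have h1 : P.real (U ∩ V) ≤ 1 := measureReal_le_one
    have h2 : P.real U ≤ 1 := measureReal_le_one
    have h3 : P.real V ≤ 1 := measureReal_le_one
    have h4 : 0 ≤ P.real (U ∩ V) := measureReal_nonneg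
    have h5 : 0 ≤ P.real U := measureReal_nonneg
    have h6 : 0 ≤ P.real V := measureReal_nonneg
    rw [abs_le]
    constructor <;> nlinarith [mul_nonneg h5 h6]
  · refine ⟨i, {x | x i ∈ A}, {x | x j ∈ A}, ?_, ?_, rfl⟩
    · have : MeasurableSpace.comap (fun x : ℕ → ℝ => x i) inferInstance ≤
          ⨆ l ∈ Set.Iic i, MeasurableSpace.comap (fun x : ℕ → ℝ => x l) inferInstance :=
        le_iSup₂_of_le i (Set.mem_Iic.2 le_rfl) le_rfl
      exact this _ ⟨A, hA, rfl⟩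
    · have : MeasurableSpace.comap (fun x : ℕ → ℝ => x j) inferInstance ≤
          ⨆ l ∈ Set.Ici (i + n), MeasurableSpace.comap (fun x : ℕ → ℝ => x l) inferInstance :=
        le_iSup₂_of_le j (Set.mem_Ici.2 hij) le_rfl
      exact this _ ⟨A, hA, rfl⟩

lemma emp_real (n : ℕ) (x : ℕ → ℝ) (A : Set ℝ) (hA : MeasurableSet A) :
    (empMeas n x A).toReal = (∑ i ∈ Finset.range n, A.indicator (fun _ => (1 : ℝ)) (x i)) / n := by
  unfold empMeas
  simp only [Measure.smul_apply, Measure.finsetSum_apply, smul_eq_mul, ENNReal.toReal_mul,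
    ENNReal.toReal_inv, ENNReal.toReal_natCast]
  rw [ENNReal.toReal_sum]
  · rw [div_eq_inv_mul]
    congr 1
    refine Finset.sum_congr rfl fun i _ => ?_
    rw [Measure.dirac_apply' _ hA]
    by_cases h : x i ∈ A <;> simp [h]
  · intro i _
    exact measure_ne_top _ _

lemma second_moment (P : Measure (ℕ → ℝ)) [IsProbabilityMeasure P]
    (ha : ∀ i : ℕ, P.map (fun x => x i) = P.map (fun x => x 0)) (n₀ : ℕ) (ε : ℝ) (hε : 0 ≤ ε)
    (hm : mixingCoef P (fun i x => x i) n₀ ≤ ε) (A : Set ℝ) (hA : MeasurableSet A) (n : ℕ) :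
    ∫ x, (∑ i ∈ Finset.range n,
      (A.indicator (fun _ => (1 : ℝ)) (x i) - (P.map (fun y => y 0)).real A)) ^ 2 ∂P
      ≤ n * (2 * n₀ + n * ε) := by
  set p := (P.map (fun y : ℕ → ℝ => y 0)).real A with hp
  have hpi : ∀ i, P.real {x | x i ∈ A} = p := by
    intro i
    rw [hp, ← ha i, map_measureReal_apply (measurable_pi_apply i) hA]
    rfl
  have hmeas : ∀ i, MeasurableSet {x : ℕ → ℝ | x i ∈ A} := fun i => measurable_pi_apply i hA
  have hf : ∀ i, (fun x : ℕ → ℝ => A.indicator (fun _ => (1 : ℝ)) (x i))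
      = {x : ℕ → ℝ | x i ∈ A}.indicator (fun _ => (1 : ℝ)) := by
    intro i; ext x; simp [Set.indicator]
  have hint : ∀ S : Set (ℕ → ℝ), MeasurableSet S →
      Integrable (S.indicator (fun _ => (1 : ℝ))) P :=
    fun S hS => (integrable_const (1 : ℝ)).indicator hS
  have hval : ∀ S : Set (ℕ → ℝ), MeasurableSet S →
      ∫ x, S.indicator (fun _ => (1 : ℝ)) x ∂P = P.real S := by
    intro S hS; rw [integral_indicator_const _ hS]; simp
  have hprod : ∀ i j, (fun x : ℕ → ℝ => (A.indicator (fun _ => (1 : ℝ)) (x i) - p) *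
      (A.indicator (fun _ => (1 : ℝ)) (x j) - p)) =
      fun x => ((({x : ℕ → ℝ | x i ∈ A} ∩ {x | x j ∈ A}).indicator (fun _ => (1 : ℝ)) x
        - p * {x : ℕ → ℝ | x i ∈ A}.indicator (fun _ => (1 : ℝ)) x)
        - p * {x : ℕ → ℝ | x j ∈ A}.indicator (fun _ => (1 : ℝ)) x) + p * p := by
    intro i j; ext x
    by_cases h1 : x i ∈ A <;> by_cases h2 : x j ∈ A <;> simp [h1, h2] <;> ring
  have hI1 : ∀ i j, Integrable (fun x : ℕ → ℝ =>
      ({x : ℕ → ℝ | x i ∈ A} ∩ {x | x j ∈ A}).indicator (fun _ => (1 : ℝ)) x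
        - p * {x : ℕ → ℝ | x i ∈ A}.indicator (fun _ => (1 : ℝ)) x) P := fun i j =>
    (hint _ ((hmeas i).inter (hmeas j))).sub ((hint _ (hmeas i)).const_mul p)
  have hI2 : ∀ i j, Integrable (fun x : ℕ → ℝ =>
      (({x : ℕ → ℝ | x i ∈ A} ∩ {x | x j ∈ A}).indicator (fun _ => (1 : ℝ)) x
        - p * {x : ℕ → ℝ | x i ∈ A}.indicator (fun _ => (1 : ℝ)) x)
        - p * {x : ℕ → ℝ | x j ∈ A}.indicator (fun _ => (1 : ℝ)) x) P := fun i j =>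
    (hI1 i j).sub ((hint _ (hmeas j)).const_mul p)
  have hprodI : ∀ i j, Integrable (fun x : ℕ → ℝ => (A.indicator (fun _ => (1 : ℝ)) (x i) - p) *
      (A.indicator (fun _ => (1 : ℝ)) (x j) - p)) P := by
    intro i j
    rw [hprod]
    exact (hI2 i j).add (integrable_const _)
  have hcov : ∀ i j, ∫ x, (A.indicator (fun _ => (1 : ℝ)) (x i) - p) *
      (A.indicator (fun _ => (1 : ℝ)) (x j) - p) ∂P =
      P.real ({x | x i ∈ A} ∩ {x | x j ∈ A}) - p * p := by
    intro i j
    rw [hprod, integral_add (hI2 i j) (integrable_const _),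
      integral_sub (hI1 i j) ((hint _ (hmeas j)).const_mul p),
      integral_sub (hint _ ((hmeas i).inter (hmeas j))) ((hint _ (hmeas i)).const_mul p),
      integral_const_mul, integral_const_mul, hval _ (hmeas i), hval _ (hmeas j),
      hval _ ((hmeas i).inter (hmeas j)), hpi, hpi]
    simp
  have hbound : ∀ i j, P.real ({x | x i ∈ A} ∩ {x | x j ∈ A}) - p * p ≤
      ε + (if j < i + n₀ ∧ i < j + n₀ then (1 : ℝ) else 0) := by
    intro i j
    split_ifs with h
    · have h1 : P.real ({x | x i ∈ A} ∩ {x | x j ∈ A}) ≤ 1 := measureReal_le_one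
      nlinarith [mul_self_nonneg p]
    · rw [add_zero]
      rcases (by omega : i + n₀ ≤ j ∨ j + n₀ ≤ i) with h | h
      · have := mix_le P n₀ i j h A hA
        rw [hpi, hpi] at this
        exact (le_abs_self _).trans (this.trans hm)
      · have := mix_le P n₀ j i h A hA
        rw [hpi, hpi, Set.inter_comm] at this
        exact (le_abs_self _).trans (this.trans hm)
  have hsq : ∀ x : ℕ → ℝ, (∑ i ∈ Finset.range n,
      (A.indicator (fun _ => (1 : ℝ)) (x i) - p)) ^ 2 = ∑ i ∈ Finset.range n,
      ∑ j ∈ Finset.range n, (A.indicator (fun _ => (1 : ℝ)) (x i) - p) *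
      (A.indicator (fun _ => (1 : ℝ)) (x j) - p) := by
    intro x; rw [sq, Finset.sum_mul_sum]
  simp_rw [hsq]
  rw [integral_finsetSum _ (fun i _ => integrable_finsetSum _ fun j _ => hprodI i j)]
  simp_rw [fun i => integral_finsetSum (μ := P) (Finset.range n) (fun j _ => hprodI i j), hcov]
  calc ∑ i ∈ Finset.range n, ∑ j ∈ Finset.range n,
        (P.real ({x | x i ∈ A} ∩ {x | x j ∈ A}) - p * p)
      ≤ ∑ i ∈ Finset.range n, (2 * (n₀ : ℝ) + n * ε) := by
        refine Finset.sum_le_sum fun i _ => ?_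
        refine (Finset.sum_le_sum fun j _ => hbound i j).trans ?_
        rw [Finset.sum_add_distrib, Finset.sum_const, Finset.sum_boole, Finset.card_range,
          nsmul_eq_mul]
        have hsub : (Finset.range n).filter (fun j => j < i + n₀ ∧ i < j + n₀) ⊆
            Finset.Ico (i + 1 - n₀) (i + n₀) := by
          intro j hj
          simp only [Finset.mem_filter, Finset.mem_range, Finset.mem_Ico] at hj ⊢
          omega
        have hcard := Finset.card_le_card hsub
        rw [Nat.card_Ico] at hcard
        have h2 : ((Finset.range n).filter (fun j => j < i + n₀ ∧ i < j + n₀)).card ≤ 2 * n₀ := by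
          omega
        have h3 : (((Finset.range n).filter
          (fun j => j < i + n₀ ∧ i < j + n₀)).card : ℝ) ≤ 2 * n₀ := by exact_mod_cast h2
        linarith
    _ = n * (2 * n₀ + n * ε) := by simp; ring

lemma wlln (Ps : Set (Measure (ℕ → ℝ)))
    (hprob : ∀ P ∈ Ps, IsProbabilityMeasure P)
    (ha : ∀ P ∈ Ps, ∀ i : ℕ, P.map (fun x => x i) = P.map (fun x => x 0))
    (hc : ∀ ε : ℝ, 0 < ε → ∃ n₀ : ℕ, ∀ n ≥ n₀, ∀ P ∈ Ps,
      mixingCoef P (fun i x => x i) n ≤ ε) (η ε : ℝ) (hη : 0 < η) (hε : 0 < ε) :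
    ∃ N : ℕ, ∀ n ≥ N, ∀ P ∈ Ps, ∀ A : Set ℝ, MeasurableSet A →
      P.real {x | η ≤ |(empMeas n x A).toReal - (P.map (fun y => y 0)).real A|} ≤ ε := by
  obtain ⟨n₀, hn₀⟩ := hc (ε * η ^ 2 / 2) (by positivity)
  obtain ⟨N, hN⟩ := exists_nat_gt (4 * n₀ / (ε * η ^ 2))
  refine ⟨N + 1, fun n hn P hP A hA => ?_⟩
  have := hprob P hP
  have hn0 : (0 : ℝ) < n := by exact_mod_cast (by omega : 0 < n)
  have hnN : (N : ℝ) ≤ n := by exact_mod_cast (by omega : N ≤ n)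
  have hbig : 4 * n₀ < n * (ε * η ^ 2) := by
    rw [div_lt_iff₀ (by positivity)] at hN
    have : (N : ℝ) * (ε * η ^ 2) ≤ n * (ε * η ^ 2) := by gcongr
    linarith
  have hsm := second_moment P (ha P hP) n₀ (ε * η ^ 2 / 2) (by positivity) (hn₀ n₀ le_rfl P hP)
    A hA n
  set p := (P.map (fun y : ℕ → ℝ => y 0)).real A with hp
  set S : (ℕ → ℝ) → ℝ := fun x => ∑ i ∈ Finset.range n,
    (A.indicator (fun _ => (1 : ℝ)) (x i) - p) with hS
  have hSm : Measurable S := by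
    refine Finset.measurable_sum _ fun i _ => ?_
    exact ((measurable_const.indicator hA).comp (measurable_pi_apply i)).sub_const p
  have hSb : ∀ x, |S x| ≤ n * (1 + |p|) := by
    intro x
    refine (Finset.abs_sum_le_sum_abs _ _).trans ?_
    calc _ ≤ ∑ i ∈ Finset.range n, (1 + |p|) := by
          refine Finset.sum_le_sum fun i _ => ?_
          refine (abs_sub _ _).trans ?_
          gcongr
          by_cases h : x i ∈ A <;> simp [h]
      _ = _ := by simp; ring
  have hSI : Integrable (fun x => S x ^ 2) P := by
    refine Integrable.of_bound (hSm.pow_const 2).aestronglyMeasurable ((n * (1 + |p|)) ^ 2) ?_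
    refine Eventually.of_forall fun x => ?_
    rw [Real.norm_eq_abs, abs_pow]
    have := hSb x
    gcongr
  have hmk := mul_meas_ge_le_integral_of_nonneg (μ := P) (f := fun x => S x ^ 2)
    (Eventually.of_forall fun x => sq_nonneg _) hSI ((η * n) ^ 2)
  have hset : {x | η ≤ |(empMeas n x A).toReal - p|} ⊆ {x | (η * n) ^ 2 ≤ S x ^ 2} := by
    intro x hx
    simp only [Set.mem_ofPred_eq] at hx ⊢
    have hSx : S x = ((empMeas n x A).toReal - p) * n := by
      rw [emp_real n x A hA, hS]
      simp only [Finset.sum_sub_distrib, Finset.sum_const, Finset.card_range, nsmul_eq_mul]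
      field_simp
    rw [hSx, ← sq_abs (((empMeas n x A).toReal - p) * n), abs_mul, abs_of_pos hn0]
    gcongr
  have h1 : P.real {x | η ≤ |(empMeas n x A).toReal - p|} ≤ P.real {x | (η * n) ^ 2 ≤ S x ^ 2} :=
    measureReal_mono hset
  have h2 : (η * n) ^ 2 * P.real {x | (η * n) ^ 2 ≤ S x ^ 2} ≤
      n * (2 * n₀ + n * (ε * η ^ 2 / 2)) := hmk.trans hsm
  refine h1.trans ?_
  have h3 : (η * n) ^ 2 * P.real {x | (η * n) ^ 2 ≤ S x ^ 2} ≤ (η * n) ^ 2 * ε := by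
    refine h2.trans ?_
    nlinarith
  exact le_of_mul_le_mul_left h3 (by positivity)

lemma exists_quantile (μ : Measure ℝ) [IsProbabilityMeasure μ] (q : ℝ) (h0 : 0 < q) (h1 : q < 1) :
    ∃ t : ℝ, q ≤ μ.real (Set.Iic t) ∧ μ.real (Set.Iio t) ≤ q := by
  let F := ProbabilityTheory.cdf μ
  have hF : ∀ x, F x = μ.real (Set.Iic x) := ProbabilityTheory.cdf_eq_real μ
  set S := {x | q ≤ F x} with hS
  have hne : S.Nonempty := by
    obtain ⟨x, hx⟩ := ((ProbabilityTheory.tendsto_cdf_atTop μ).eventually (lt_mem_nhds h1)).exists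
    exact ⟨x, hx.le⟩
  have hbdd : BddBelow S := by
    obtain ⟨x, hx⟩ := ((ProbabilityTheory.tendsto_cdf_atBot μ).eventually (gt_mem_nhds h0)).exists
    refine ⟨x, fun y hy => ?_⟩
    by_contra hlt
    have : F y ≤ F x := F.mono (not_le.1 hlt).le
    exact absurd (le_trans hy this) (not_le.2 hx)
  refine ⟨sInf S, ?_, ?_⟩
  · rw [← hF]
    have hrc : Tendsto F (𝓝[>] (sInf S)) (𝓝 (F (sInf S))) :=
      (F.right_continuous (sInf S)).mono_left (nhdsWithin_mono _ Set.Ioi_subset_Ici_self)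
    refine ge_of_tendsto hrc ?_
    filter_upwards [self_mem_nhdsWithin] with y hy
    obtain ⟨z, hz, hzy⟩ := exists_lt_of_csInf_lt hne hy
    exact le_trans hz (F.mono hzy.le)
  · have hun : Set.Iio (sInf S) = ⋃ n : ℕ, Set.Iic (sInf S - 1 / ((n : ℝ) + 1)) := by
      ext y
      simp only [Set.mem_Iio, Set.mem_iUnion, Set.mem_Iic]
      constructor
      · intro h
        obtain ⟨n, hn⟩ := exists_nat_one_div_lt (sub_pos.2 h)
        exact ⟨n, by linarith⟩
      · rintro ⟨n, hn⟩
        have : (0 : ℝ) < 1 / ((n : ℝ) + 1) := by positivity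
        linarith
    have hmono : Monotone (fun n : ℕ => Set.Iic (sInf S - 1 / ((n : ℝ) + 1))) := by
      intro a b hab
      apply Set.Iic_subset_Iic.2
      have := one_div_le_one_div_of_le (by positivity : (0 : ℝ) < (a : ℝ) + 1)
        (by exact_mod_cast Nat.add_le_add_right hab 1 : (a : ℝ) + 1 ≤ (b : ℝ) + 1)
      linarith
    have ht := tendsto_measure_iUnion_atTop (μ := μ) hmono
    rw [← hun] at ht
    have ht' := (ENNReal.tendsto_toReal (measure_ne_top μ (Set.Iio (sInf S)))).comp ht
    refine le_of_tendsto ht' (Eventually.of_forall fun n => ?_)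
    have hlt : sInf S - 1 / ((n : ℝ) + 1) < sInf S := by
      have : (0 : ℝ) < 1 / ((n : ℝ) + 1) := by positivity
      linarith
    have := notMem_of_lt_csInf hlt hbdd
    have h2 : F (sInf S - 1 / ((n : ℝ) + 1)) < q := not_le.1 this
    rw [hF] at h2
    exact h2.le

lemma emp_prob (n : ℕ) (hn : 0 < n) (x : ℕ → ℝ) : IsProbabilityMeasure (empMeas n x) := by
  constructor
  unfold empMeas
  simp
  exact ENNReal.inv_mul_cancel (by simpa using hn.ne') (by simp)

lemma levy_le (μ ν : Measure ℝ) [IsProbabilityMeasure μ] [IsProbabilityMeasure ν] (m : ℕ)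
    (hm : 0 < m) (η : ℝ) (hη : 0 < η) (t : ℕ → ℝ)
    (ht : ∀ k, 0 < k → k < m → (k : ℝ) / m ≤ ν.real (Set.Iic (t k)) ∧
      ν.real (Set.Iio (t k)) ≤ (k : ℝ) / m)
    (h : ∀ k < m, |μ.real (Set.Iic (t k)) - ν.real (Set.Iic (t k))| < η ∧
      |μ.real (Set.Iio (t k)) - ν.real (Set.Iio (t k))| < η) :
    dLevy μ ν ≤ η + 1 / m := by
  have hm0 : (0 : ℝ) < m := by exact_mod_cast hm
  have hlow : ∀ x, ν.real (Set.Iic x) ≤ μ.real (Set.Iic x) + (η + 1 / m) := by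
    intro x
    by_cases hx : ν.real (Set.Iic x) ≤ 1 / m
    · have : 0 ≤ μ.real (Set.Iic x) := measureReal_nonneg
      linarith
    · push Not at hx
      obtain ⟨k, hk⟩ : ∃ k, ⌈m * ν.real (Set.Iic x)⌉₊ = k + 1 := by
        refine Nat.exists_eq_succ_of_ne_zero ?_
        have : 0 < m * ν.real (Set.Iic x) := mul_pos hm0 (lt_trans (by positivity) hx)
        exact (Nat.ceil_pos.2 this).ne'
      have hle : m * ν.real (Set.Iic x) ≤ (k : ℝ) + 1 := by
        have := Nat.le_ceil (m * ν.real (Set.Iic x))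
        rw [hk] at this
        exact_mod_cast this
      have hgt : (k : ℝ) < m * ν.real (Set.Iic x) := Nat.lt_ceil.1 (by omega)
      have h1 : ν.real (Set.Iic x) ≤ 1 := measureReal_le_one
      have hkm : k < m := by
        have : (k : ℝ) < m := by nlinarith
        exact_mod_cast this
      have hk0 : 0 < k := by
        rw [div_lt_iff₀ hm0] at hx
        have : (0 : ℝ) < k := by linarith
        exact_mod_cast this
      obtain ⟨h2, h3⟩ := ht k hk0 hkm
      have htx : t k ≤ x := by
        by_contra hlt
        have : ν.real (Set.Iic x) ≤ ν.real (Set.Iio (t k)) :=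
          measureReal_mono (Set.Iic_subset_Iio.2 (not_le.1 hlt))
        have h4 := this.trans h3
        rw [le_div_iff₀ hm0] at h4
        linarith
      have h5 : μ.real (Set.Iic (t k)) ≤ μ.real (Set.Iic x) :=
        measureReal_mono (Set.Iic_subset_Iic.2 htx)
      have h6 := (abs_lt.1 (h k hkm).1).1
      have h7 : ν.real (Set.Iic x) ≤ (k : ℝ) / m + 1 / m := by
        rw [← add_div, le_div_iff₀ hm0]; linarith
      linarith
  have hup : ∀ x, μ.real (Set.Iic x) ≤ ν.real (Set.Iic x) + (η + 1 / m) := by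
    intro x
    set k := ⌊m * ν.real (Set.Iic x)⌋₊ + 1 with hk
    have hnn : 0 ≤ ν.real (Set.Iic x) := measureReal_nonneg
    have hlt : m * ν.real (Set.Iic x) < k := by
      have := Nat.lt_floor_add_one (m * ν.real (Set.Iic x))
      rw [hk]; exact_mod_cast this
    have hge : (k : ℝ) ≤ m * ν.real (Set.Iic x) + 1 := by
      have := Nat.floor_le (mul_nonneg hm0.le hnn)
      rw [hk]; push_cast; linarith
    have h7 : (k : ℝ) / m ≤ ν.real (Set.Iic x) + 1 / m := by
      rw [div_le_iff₀ hm0, add_mul, one_div_mul_cancel hm0.ne']; linarith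
    by_cases hkm : k < m
    · obtain ⟨h2, h3⟩ := ht k (by omega) hkm
      have hxt : x < t k := by
        by_contra hlt'
        have : ν.real (Set.Iic (t k)) ≤ ν.real (Set.Iic x) :=
          measureReal_mono (Set.Iic_subset_Iic.2 (not_lt.1 hlt'))
        have h4 := h2.trans this
        rw [div_le_iff₀ hm0] at h4
        linarith
      have h5 : μ.real (Set.Iic x) ≤ μ.real (Set.Iio (t k)) :=
        measureReal_mono (Set.Iic_subset_Iio.2 hxt)
      have h6 := (abs_lt.1 (h k hkm).2).2
      linarith
    · have h8 : (1 : ℝ) ≤ (k : ℝ) / m := by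
        rw [le_div_iff₀ hm0, one_mul]
        exact_mod_cast not_lt.1 hkm
      have h9 : μ.real (Set.Iic x) ≤ 1 := measureReal_le_one
      linarith
  have hpos : 0 < η + 1 / (m : ℝ) := by positivity
  unfold dLevy
  refine csInf_le ⟨0, fun e he => he.1.le⟩ ⟨hpos, fun x => ⟨?_, ?_⟩⟩
  · change μ.real (Set.Iic (x - (η + 1 / m))) - (η + 1 / m) ≤ ν.real (Set.Iic x)
    have h1 := hup (x - (η + 1 / m))
    have h2 : ν.real (Set.Iic (x - (η + 1 / m))) ≤ ν.real (Set.Iic x) :=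
      measureReal_mono (Set.Iic_subset_Iic.2 (by linarith))
    linarith
  · change ν.real (Set.Iic x) ≤ μ.real (Set.Iic (x + (η + 1 / m))) + (η + 1 / m)
    have h1 := hlow x
    have h2 : μ.real (Set.Iic x) ≤ μ.real (Set.Iic (x + (η + 1 / m))) :=
      measureReal_mono (Set.Iic_subset_Iic.2 (by linarith))
    linarith

/-- **UGC property w.r.t. the Lévy metric** (Corollary 3.9): for a class `𝓟` of laws on
`ℝ^ℕ` with identical marginals and uniformly decaying strong mixing coefficients, the
empirical measures converge to the marginal in probability w.r.t. `d_Lévy`, uniformly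
over `𝓟`. -/
theorem ugc_levy
    (Ps : Set (Measure (ℕ → ℝ)))
    (hprob : ∀ P ∈ Ps, IsProbabilityMeasure P)
    -- (a) identical marginals
    (ha : ∀ P ∈ Ps, ∀ i : ℕ, P.map (fun x => x i) = P.map (fun x => x 0))
    -- (c) uniformly decaying strong mixing coefficients
    (hc : ∀ ε : ℝ, 0 < ε → ∃ n₀ : ℕ, ∀ n ≥ n₀, ∀ P ∈ Ps,
      mixingCoef P (fun i x => x i) n ≤ ε) :
    ∀ δ : ℝ, 0 < δ →
      Tendsto (fun n : ℕ => ⨆ P ∈ Ps,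
          P {x : ℕ → ℝ | δ ≤ dLevy (empMeas n x) (Measure.map (fun y => y 0) P)})
        atTop (nhds 0) := by
  intro δ hδ
  rw [ENNReal.tendsto_nhds_zero]
  intro e he
  -- reduce to a real error bound
  obtain ⟨ε, hε, hεe⟩ : ∃ ε : ℝ, 0 < ε ∧ ENNReal.ofReal ε ≤ e := by
    by_cases htop : e = ⊤
    · exact ⟨1, one_pos, by simp [htop]⟩
    · exact ⟨e.toReal, ENNReal.toReal_pos he.ne' htop, by rw [ENNReal.ofReal_toReal htop]⟩
  obtain ⟨m', hm'⟩ := exists_nat_one_div_lt (by positivity : (0 : ℝ) < δ / 4)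
  set m := m' + 1 with hmdef
  have hm : 0 < m := Nat.succ_pos _
  have hm0 : (0 : ℝ) < m := by exact_mod_cast hm
  have hmδ : 1 / (m : ℝ) < δ / 4 := by rw [hmdef]; push_cast; exact hm'
  obtain ⟨N, hN⟩ := wlln Ps hprob ha hc (δ / 4) (ε / (2 * m)) (by positivity) (by positivity)
  filter_upwards [eventually_ge_atTop (N + 1)] with n hn
  refine iSup₂_le fun P hP => le_trans ?_ hεe
  have := hprob P hP
  have hν : IsProbabilityMeasure (P.map (fun y : ℕ → ℝ => y 0)) :=
    Measure.isProbabilityMeasure_map (measurable_pi_apply 0).aemeasurable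
  set ν := P.map (fun y : ℕ → ℝ => y 0) with hνdef
  have hq : ∀ k : ℕ, ∃ t : ℝ, 0 < k → k < m → (k : ℝ) / m ≤ ν.real (Set.Iic t) ∧
      ν.real (Set.Iio t) ≤ (k : ℝ) / m := by
    intro k
    by_cases hk : 0 < k ∧ k < m
    · have h0 : (0 : ℝ) < k := by exact_mod_cast hk.1
      have h1 : (k : ℝ) < m := by exact_mod_cast hk.2
      obtain ⟨t, ht⟩ := exists_quantile ν ((k : ℝ) / m) (by positivity)
        ((div_lt_one hm0).2 h1)
      exact ⟨t, fun _ _ => ht⟩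
    · exact ⟨0, fun h1 h2 => absurd ⟨h1, h2⟩ hk⟩
  choose t ht using hq
  let bad : Set ℝ → Set (ℕ → ℝ) := fun A => {x | δ / 4 ≤ |(empMeas n x A).toReal - ν.real A|}
  have hsub : {x : ℕ → ℝ | δ ≤ dLevy (empMeas n x) ν} ⊆
      ⋃ k ∈ Finset.range m, (bad (Set.Iic (t k)) ∪ bad (Set.Iio (t k))) := by
    intro x hx
    by_contra hcon
    simp only [Set.mem_iUnion, Finset.mem_range, not_exists] at hcon
    have hep := emp_prob n (by omega) x
    have hl := levy_le (empMeas n x) ν m hm (δ / 4) (by positivity) t ht (by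
      intro k hk
      have h1 := hcon k hk
      rw [Set.mem_union, not_or] at h1
      exact ⟨not_le.1 h1.1, not_le.1 h1.2⟩)
    have hx' : δ ≤ dLevy (empMeas n x) ν := hx
    linarith
  have hbad : ∀ A, MeasurableSet A → P.real (bad A) ≤ ε / (2 * m) :=
    fun A hA => hN n (by omega) P hP A hA
  have hreal : P.real {x : ℕ → ℝ | δ ≤ dLevy (empMeas n x) ν} ≤ ε := by
    refine (measureReal_mono hsub (measure_ne_top _ _)).trans ?_
    refine (measureReal_biUnion_finset_le _ _).trans ?_
    calc ∑ k ∈ Finset.range m, P.real (bad (Set.Iic (t k)) ∪ bad (Set.Iio (t k)))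
        ≤ ∑ k ∈ Finset.range m, (ε / (2 * m) + ε / (2 * m)) := by
          refine Finset.sum_le_sum fun k _ => ?_
          exact (measureReal_union_le _ _).trans
            (add_le_add (hbad _ measurableSet_Iic) (hbad _ measurableSet_Iio))
      _ = ε := by
          simp only [Finset.sum_const, Finset.card_range, nsmul_eq_mul]
          field_simp
          norm_num
  rw [← ofReal_measureReal]
  exact ENNReal.ofReal_le_ofReal hreal
end

section
/- (Uniform weak law of large numbers for strongly mixing arrays.) Let Π ≠ ∅ be an arbitrary index set. For every π ∈ Π let (Ω_π,𝓕_π,P_π) be a probability space and ξ_{1,π}, ξ_{2,π}, … a sequence of real random variables on it which are identically distributed and strongly mixing with mixing coefficients α_π(n). Assume: (i) lim_{K→∞} sup_{π∈Π} E_π[|ξ_{1,π}| 1_{|ξ_{1,π}|≥K}] = 0, and (ii) lim_{n→∞} sup_{π∈Π} α_π(n) = 0. Then for every δ > 0: lim_{n→∞} sup_{π∈Π} P_π[ |(1/n)∑_{i=1}^n ξ_{i,π} − E_π[ξ_{1,π}]| ≥ δ ] = 0. -/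
open MeasureTheory Filter Topology

lemma layer_bound {Ω : Type*} {m m0 : MeasurableSpace Ω} (hm : m ≤ m0)
    (μ ν : Measure Ω) [IsFiniteMeasure μ] [IsFiniteMeasure ν] (α : ℝ)
    (h : ∀ A, MeasurableSet[m] A → |μ.real A - ν.real A| ≤ α)
    (X : Ω → ℝ) (hX : Measurable[m] X) (h0 : ∀ ω, 0 ≤ X ω) (h1 : ∀ ω, X ω ≤ 1) :
    |∫ ω, X ω ∂μ - ∫ ω, X ω ∂ν| ≤ α := by
  have hX' : Measurable X := hX.mono hm le_rfl
  have key : ∀ ρ : Measure Ω, IsFiniteMeasure ρ →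
      ∫ ω, X ω ∂ρ = ∫ t in (0:ℝ)..1, ρ.real {a | t ≤ X a} ∧
      IntervalIntegrable (fun t => ρ.real {a | t ≤ X a}) volume 0 1 := by
    intro ρ _
    have hi : Integrable X ρ := by
      refine Integrable.of_bound hX'.aestronglyMeasurable 1 (Eventually.of_forall fun ω => ?_)
      rw [Real.norm_eq_abs, abs_of_nonneg (h0 ω)]; exact h1 ω
    refine ⟨?_, ?_⟩
    · rw [intervalIntegral.integral_of_le zero_le_one]
      exact hi.integral_eq_integral_Ioc_meas_le (Eventually.of_forall h0) (Eventually.of_forall h1)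
    · apply AntitoneOn.intervalIntegrable
      intro a _ b _ hab
      exact measureReal_mono (fun ω (hω : b ≤ X ω) => (hab.trans hω : a ≤ X ω))
  obtain ⟨e1, i1⟩ := key μ inferInstance
  obtain ⟨e2, i2⟩ := key ν inferInstance
  rw [e1, e2, ← intervalIntegral.integral_sub i1 i2]
  have := intervalIntegral.norm_integral_le_of_norm_le_const (a := (0:ℝ)) (b := 1) (C := α)
    (f := fun t => μ.real {a | t ≤ X a} - ν.real {a | t ≤ X a})
    (fun t _ => h _ (measurableSet_le (measurable_const) hX))
  simpa using this

lemma cov_bound {Ω : Type*} {mA mB m0 : MeasurableSpace Ω} (hA : mA ≤ m0) (hB : mB ≤ m0)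
    (P : Measure Ω) [IsProbabilityMeasure P] (α : ℝ)
    (h : ∀ A B, MeasurableSet[mA] A → MeasurableSet[mB] B →
      |P.real (A ∩ B) - P.real A * P.real B| ≤ α)
    (X Y : Ω → ℝ) (hX : Measurable[mA] X) (hX0 : ∀ ω, 0 ≤ X ω) (hX1 : ∀ ω, X ω ≤ 1)
    (hY : Measurable[mB] Y) (hY0 : ∀ ω, 0 ≤ Y ω) (hY1 : ∀ ω, Y ω ≤ 1) :
    |∫ ω, X ω * Y ω ∂P - (∫ ω, X ω ∂P) * ∫ ω, Y ω ∂P| ≤ α := by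
  have hY' : Measurable Y := hY.mono hB le_rfl
  have hX' : Measurable X := hX.mono hA le_rfl
  have hYi : Integrable Y P := by
    refine Integrable.of_bound hY'.aestronglyMeasurable 1 (Eventually.of_forall fun ω => ?_)
    rw [Real.norm_eq_abs, abs_of_nonneg (hY0 ω)]; exact hY1 ω
  have step1 : ∀ A, MeasurableSet[mA] A →
      |∫ ω in A, Y ω ∂P - P.real A * ∫ ω, Y ω ∂P| ≤ α := by
    intro A hAm
    have : IsFiniteMeasure (P A • P) := P.smul_finite (measure_ne_top _ _)
    have := layer_bound hB (P.restrict A) (P A • P) α (fun B hBm => ?_) Y hY hY0 hY1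
    · simpa [integral_smul_measure, Measure.real] using this
    · rw [measureReal_restrict_apply (hB _ hBm), Set.inter_comm, measureReal_ennreal_smul_apply]
      exact h A B hAm hBm
  set c := ∫ ω, Y ω ∂P with hc
  have hc0 : 0 ≤ c := integral_nonneg hY0
  have : IsFiniteMeasure (P.withDensity fun ω => ENNReal.ofReal (Y ω)) :=
    isFiniteMeasure_withDensity_ofReal hYi.2
  have : IsFiniteMeasure (ENNReal.ofReal c • P) := P.smul_finite ENNReal.ofReal_ne_top
  have := layer_bound hA (P.withDensity fun ω => ENNReal.ofReal (Y ω))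
    (ENNReal.ofReal c • P) α (fun A hAm => ?_) X hX hX0 hX1
  · rw [integral_smul_measure, integral_withDensity_eq_integral_toReal_smul
      (by fun_prop) (by simp)] at this
    simp only [smul_eq_mul, ENNReal.toReal_ofReal (hY0 _), ENNReal.toReal_ofReal hc0] at this
    simpa only [mul_comm] using this
  · have e : (P.withDensity fun ω => ENNReal.ofReal (Y ω)).real A = ∫ ω in A, Y ω ∂P := by
      rw [Measure.real, withDensity_apply _ (hA _ hAm), integral_eq_lintegral_of_nonneg_ae
        (Eventually.of_forall hY0) hY'.aestronglyMeasurable]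
    rw [e, measureReal_ennreal_smul_apply, ENNReal.toReal_ofReal hc0, mul_comm c]
    exact step1 A hAm

lemma mixing_apply {Ω : Type*} [m0 : MeasurableSpace Ω]
    (P : Measure Ω) [IsProbabilityMeasure P] (ξ : ℕ → Ω → ℝ) (n k : ℕ) (A B : Set Ω)
    (hA : MeasurableSet[⨆ i ∈ Set.Iic k, MeasurableSpace.comap (ξ i) inferInstance] A)
    (hB : MeasurableSet[⨆ i ∈ Set.Ici (k + n), MeasurableSpace.comap (ξ i) inferInstance] B) :
    |P.real (A ∩ B) - P.real A * P.real B| ≤ mixingCoef P ξ n := by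
  refine le_csSup ⟨1, ?_⟩ ⟨k, A, B, hA, hB, rfl⟩
  rintro r ⟨k, A, B, -, -, rfl⟩
  change |P.real (A ∩ B) - P.real A * P.real B| ≤ 1
  have h1 : P.real (A ∩ B) ≤ 1 := measureReal_le_one
  have h2 : P.real A ≤ 1 := measureReal_le_one
  have h3 : P.real B ≤ 1 := measureReal_le_one
  have h1' : 0 ≤ P.real (A ∩ B) := measureReal_nonneg
  have h2' : 0 ≤ P.real A := measureReal_nonneg
  have h3' : 0 ≤ P.real B := measureReal_nonneg
  rw [abs_le]; constructor <;> nlinarith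

lemma cov_mixing {Ω : Type*} [m0 : MeasurableSpace Ω]
    (P : Measure Ω) [IsProbabilityMeasure P] (ξ : ℕ → Ω → ℝ) (hξ : ∀ i, Measurable (ξ i))
    (φ : ℝ → ℝ) (hφ : Measurable φ) (h0 : ∀ x, 0 ≤ φ x) (h1 : ∀ x, φ x ≤ 1)
    (n i j : ℕ) (hij : i + n ≤ j) :
    |∫ ω, φ (ξ i ω) * φ (ξ j ω) ∂P - (∫ ω, φ (ξ i ω) ∂P) * ∫ ω, φ (ξ j ω) ∂P|
      ≤ mixingCoef P ξ n := by
  refine cov_bound (mA := ⨆ i' ∈ Set.Iic i, MeasurableSpace.comap (ξ i') inferInstance)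
    (mB := ⨆ i' ∈ Set.Ici (i + n), MeasurableSpace.comap (ξ i') inferInstance)
    (iSup₂_le fun k _ => (hξ k).comap_le) (iSup₂_le fun k _ => (hξ k).comap_le) P _
    (fun A B hA hB => mixing_apply P ξ n i A B hA hB) _ _ ?_ (fun _ => h0 _) (fun _ => h1 _)
    ?_ (fun _ => h0 _) (fun _ => h1 _)
  · refine hφ.comp ((comap_measurable (ξ i)).mono ?_ le_rfl)
    exact le_iSup₂_of_le (f := fun i' (_ : i' ∈ Set.Iic i) =>
      MeasurableSpace.comap (ξ i') inferInstance) i (by simp) le_rfl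
  · refine hφ.comp ((comap_measurable (ξ j)).mono ?_ le_rfl)
    exact le_iSup₂_of_le (f := fun i' (_ : i' ∈ Set.Ici (i + n)) =>
      MeasurableSpace.comap (ξ i') inferInstance) j hij le_rfl

lemma second_moment_s7 {Ω : Type*} [m0 : MeasurableSpace Ω]
    (P : Measure Ω) [IsProbabilityMeasure P] (X : ℕ → Ω → ℝ) (hX : ∀ i, Measurable (X i))
    (h0 : ∀ i ω, 0 ≤ X i ω) (h1 : ∀ i ω, X i ω ≤ 1) (c : ℝ) (hc : ∀ i, ∫ ω, X i ω ∂P = c)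
    (m : ℕ) (a : ℝ) (ha : 0 ≤ a)
    (hcov : ∀ i j, i + m ≤ j → |∫ ω, X i ω * X j ω ∂P - c * c| ≤ a)
    (n : ℕ) (hn : 0 < n) :
    ∫ ω, ((n:ℝ)⁻¹ * ∑ i ∈ Finset.range n, X i ω - c) ^ 2 ∂P ≤ 2 * m / n + a := by
  have hb : ∀ i, Integrable (X i) P := fun i => by
    refine Integrable.of_bound (hX i).aestronglyMeasurable 1 (Eventually.of_forall fun ω => ?_)
    rw [Real.norm_eq_abs, abs_of_nonneg (h0 i ω)]; exact h1 i ω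
  have hbb : ∀ i j, Integrable (fun ω => X i ω * X j ω) P := fun i j => by
    refine Integrable.of_bound ((hX i).mul (hX j)).aestronglyMeasurable 1
      (Eventually.of_forall fun ω => ?_)
    rw [Real.norm_eq_abs, abs_of_nonneg (mul_nonneg (h0 i ω) (h0 j ω))]
    exact mul_le_one₀ (h1 i ω) (h0 j ω) (h1 j ω)
  have hc0 : 0 ≤ c := hc 0 ▸ integral_nonneg (h0 0)
  have hn' : (n:ℝ) ≠ 0 := by positivity
  have hexp : ∀ ω, ((n:ℝ)⁻¹ * ∑ i ∈ Finset.range n, X i ω - c) ^ 2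
      = ((n:ℝ)⁻¹)^2 * ∑ i ∈ Finset.range n, ∑ j ∈ Finset.range n, (X i ω - c) * (X j ω - c) := by
    intro ω
    rw [← Finset.sum_mul_sum, Finset.sum_sub_distrib]
    simp only [Finset.sum_const, Finset.card_range, nsmul_eq_mul]
    field_simp
  have hprod : ∀ i j, Integrable (fun ω => (X i ω - c) * (X j ω - c)) P := by
    intro i j
    have : (fun ω => (X i ω - c) * (X j ω - c))
      = fun ω => X i ω * X j ω - c * X i ω - c * X j ω + c * c := by ext; ring
    rw [this]
    exact (((hbb i j).sub ((hb i).const_mul c)).sub ((hb j).const_mul c)).add (integrable_const _)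
  have hpi : ∀ i j, ∫ ω, (X i ω - c) * (X j ω - c) ∂P = ∫ ω, X i ω * X j ω ∂P - c * c := by
    intro i j
    have : (fun ω => (X i ω - c) * (X j ω - c))
      = fun ω => X i ω * X j ω - c * X i ω - c * X j ω + c * c := by ext; ring
    have q1 : Integrable (fun ω => X i ω * X j ω - c * X i ω) P :=
      (hbb i j).sub ((hb i).const_mul c)
    have q2 : Integrable (fun ω => X i ω * X j ω - c * X i ω - c * X j ω) P :=
      q1.sub ((hb j).const_mul c)
    rw [this, integral_add q2 (integrable_const _), integral_sub q1 ((hb j).const_mul c),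
      integral_sub (hbb i j) ((hb i).const_mul c), integral_const_mul, integral_const_mul, hc, hc]
    simp
  have hterm : ∀ i j, ∫ ω, X i ω * X j ω ∂P - c * c
      ≤ a + if i < j + m ∧ j < i + m then 1 else 0 := by
    intro i j
    split_ifs with hh
    · have : ∫ ω, X i ω * X j ω ∂P ≤ ∫ _, (1:ℝ) ∂P := by
        refine integral_mono (hbb i j) (integrable_const _) fun ω => ?_
        exact mul_le_one₀ (h1 i ω) (h0 j ω) (h1 j ω)
      simp at this
      nlinarith
    · rcases (by omega : i + m ≤ j ∨ j + m ≤ i) with h | h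
      · linarith [(abs_le.1 (hcov i j h)).2]
      · have := (abs_le.1 (hcov j i h)).2
        simp only [mul_comm (X j _)] at this
        linarith
  have hcount : ∀ i, ∑ j ∈ Finset.range n, (if i < j + m ∧ j < i + m then (1:ℝ) else 0)
      ≤ 2 * m := by
    intro i
    rw [Finset.sum_boole]
    have : (Finset.filter (fun j => i < j + m ∧ j < i + m) (Finset.range n)).card
        ≤ (Finset.Ico (i - m) (i + m)).card := by
      apply Finset.card_le_card
      intro j hj
      simp at hj ⊢
      omega
    rw [Nat.card_Ico] at this
    have h2 : (Finset.filter (fun j => i < j + m ∧ j < i + m) (Finset.range n)).card ≤ 2 * m := by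
      omega
    exact_mod_cast h2
  simp only [hexp]
  rw [integral_const_mul, integral_finsetSum _ (fun i _ => integrable_finsetSum _ fun j _ => hprod i j)]
  simp only [integral_finsetSum _ (fun j _ => hprod _ j), hpi]
  calc _ ≤ ((n:ℝ)⁻¹)^2 * ∑ i ∈ Finset.range n, ((n:ℝ) * a + 2 * m) := by
        gcongr with i _
        calc _ ≤ ∑ j ∈ Finset.range n, (a + if i < j + m ∧ j < i + m then (1:ℝ) else 0) :=
              Finset.sum_le_sum fun j _ => hterm i j
          _ ≤ _ := by
              rw [Finset.sum_add_distrib]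
              simp only [Finset.sum_const, Finset.card_range, nsmul_eq_mul]
              linarith [hcount i]
    _ = _ := by
        simp only [Finset.sum_const, Finset.card_range, nsmul_eq_mul]
        field_simp
        ring

lemma l1_bound {Ω : Type*} [m0 : MeasurableSpace Ω]
    (P : Measure Ω) [IsProbabilityMeasure P] (ξ : ℕ → Ω → ℝ) (hξ : ∀ i, Measurable (ξ i))
    (hint : Integrable (ξ 0) P) (hident : ∀ i, P.map (ξ i) = P.map (ξ 0))
    (K : ℝ) (hK : 0 < K) (τ : ℝ) (hτ : 0 < τ)
    (hUI : ∫ ω, Set.indicator {ω' | K ≤ |ξ 0 ω'|} (fun ω' => |ξ 0 ω'|) ω ∂P ≤ τ)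
    (m : ℕ) (a : ℝ) (ha : 0 ≤ a) (hmix : mixingCoef P ξ m ≤ a) (n : ℕ) (hn : 0 < n) :
    Integrable (fun ω => |(n:ℝ)⁻¹ * ∑ i ∈ Finset.range n, ξ i ω - ∫ ω', ξ 0 ω' ∂P|) P ∧
    ∫ ω, |(n:ℝ)⁻¹ * ∑ i ∈ Finset.range n, ξ i ω - ∫ ω', ξ 0 ω' ∂P| ∂P
      ≤ 3 * τ + K ^ 2 / τ * (2 * m / n + a) := by
  have hn' : (n:ℝ) ≠ 0 := by positivity
  set φ : ℝ → ℝ := fun x => (max (-K) (min x K) + K) / (2 * K) with hφd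
  have hφ : Measurable φ := by fun_prop
  have h0 : ∀ x, 0 ≤ φ x := fun x => by
    have := le_max_left (-K) (min x K)
    exact div_nonneg (by linarith) (by linarith)
  have h1 : ∀ x, φ x ≤ 1 := fun x => by
    have : max (-K) (min x K) ≤ K := max_le (by linarith) (min_le_right _ _)
    rw [hφd]; simp only
    rw [div_le_one (by linarith)]; linarith
  -- remainder
  set ψ : ℝ → ℝ := fun x => x - (2 * K * φ x - K) with hψd
  have hψ : Measurable ψ := by fun_prop
  have hψb : ∀ x, |ψ x| ≤ Set.indicator {y : ℝ | K ≤ |y|} (fun y => |y|) x := by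
    intro x
    have e : ψ x = x - max (-K) (min x K) := by
      simp only [hψd, hφd]; field_simp; ring
    rw [e]
    by_cases hx : K ≤ |x|
    · rw [Set.indicator_of_mem (by exact hx)]
      rcases le_total 0 x with h | h
      · rw [abs_of_nonneg h] at hx ⊢
        rw [min_eq_right hx, max_eq_right (by linarith), abs_of_nonneg (by linarith)]; linarith
      · rw [abs_of_nonpos h] at hx ⊢
        rw [min_eq_left (by linarith), max_eq_left (by linarith), abs_of_nonpos (by linarith)]
        linarith
    · rw [Set.indicator_of_notMem (by exact hx)]
      push Not at hx
      rw [abs_lt] at hx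
      rw [min_eq_left hx.2.le, max_eq_right hx.1.le]; simp
  have hintφ : ∀ i, Integrable (fun ω => φ (ξ i ω)) P := fun i => by
    refine Integrable.of_bound (hφ.comp (hξ i)).aestronglyMeasurable 1
      (Eventually.of_forall fun ω => ?_)
    rw [Real.norm_eq_abs, abs_of_nonneg (h0 _)]; exact h1 _
  have hintψ0 : Integrable (fun ω => ψ (ξ 0 ω)) P :=
    hint.sub (((hintφ 0).const_mul _).sub (integrable_const _))
  have hintψ : ∀ i, Integrable (fun ω => ψ (ξ i ω)) P := fun i => by
    have : Integrable ψ (P.map (ξ i)) := by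
      rw [hident, integrable_map_measure hψ.aestronglyMeasurable (hξ 0).aemeasurable]
      exact hintψ0
    exact (integrable_map_measure hψ.aestronglyMeasurable (hξ i).aemeasurable).1 this
  have hmean : ∀ g : ℝ → ℝ, Measurable g → ∀ i, ∫ ω, g (ξ i ω) ∂P = ∫ ω, g (ξ 0 ω) ∂P := by
    intro g hg i
    rw [← integral_map (hξ i).aemeasurable hg.aestronglyMeasurable, hident,
      integral_map (hξ 0).aemeasurable hg.aestronglyMeasurable]
  have hψτ : ∫ ω, |ψ (ξ 0 ω)| ∂P ≤ τ := by
    refine le_trans (integral_mono hintψ0.abs ?_ fun ω => ?_) hUI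
    · exact hint.abs.indicator (measurableSet_le measurable_const (hξ 0).abs)
    · exact hψb (ξ 0 ω)
  set c := ∫ ω, φ (ξ 0 ω) ∂P with hc
  set d := ∫ ω, ψ (ξ 0 ω) ∂P with hd
  have hdτ : |d| ≤ τ := (abs_integral_le_integral_abs).trans hψτ
  have hE : ∫ ω, ξ 0 ω ∂P = d + 2 * K * c - K := by
    have : (fun ω => ξ 0 ω) = fun ω => ψ (ξ 0 ω) + (2 * K * φ (ξ 0 ω) - K) := by
      ext ω; simp only [hψd]; ring
    have q1 : Integrable (fun ω => 2 * K * φ (ξ 0 ω) - K) P :=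
      ((hintφ 0).const_mul _).sub (integrable_const _)
    rw [this, integral_add hintψ0 q1,
      integral_sub ((hintφ 0).const_mul _) (integrable_const _), integral_const_mul]
    simp; ring
  set Z : Ω → ℝ := fun ω => (n:ℝ)⁻¹ * ∑ i ∈ Finset.range n, φ (ξ i ω) - c with hZ
  have hZm : Measurable Z := by
    have : ∀ i, Measurable fun ω => φ (ξ i ω) := fun i => hφ.comp (hξ i)
    fun_prop
  have hZ2 : ∫ ω, Z ω ^ 2 ∂P ≤ 2 * m / n + a := by
    refine second_moment_s7 P (fun i ω => φ (ξ i ω)) (fun i => hφ.comp (hξ i)) (fun _ _ => h0 _)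
      (fun _ _ => h1 _) c (hmean φ hφ) m a ha (fun i j hij => ?_) n hn
    have := cov_mixing P ξ hξ φ hφ h0 h1 m i j hij
    rw [hmean φ hφ i, hmean φ hφ j] at this
    exact this.trans hmix
  have hZi : MemLp Z 2 P := by
    have hb : ∀ i, MemLp (fun ω => φ (ξ i ω)) 2 P := fun i => by
      refine MemLp.of_bound (hφ.comp (hξ i)).aestronglyMeasurable 1
        (Eventually.of_forall fun ω => ?_)
      rw [Real.norm_eq_abs, abs_of_nonneg (h0 _)]; exact h1 _
    exact ((memLp_finsetSum _ fun i _ => hb i).const_mul _).sub (memLp_const _)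
  have hZsq : Integrable (fun ω => Z ω ^ 2) P := hZi.integrable_sq
  have hdec : ∀ ω, (n:ℝ)⁻¹ * ∑ i ∈ Finset.range n, ξ i ω - ∫ ω', ξ 0 ω' ∂P
      = (n:ℝ)⁻¹ * ∑ i ∈ Finset.range n, ψ (ξ i ω) + 2 * K * Z ω - d := by
    intro ω
    rw [hE]
    simp only [hZ, hψd, Finset.sum_sub_distrib, ← Finset.mul_sum, Finset.sum_const,
      Finset.card_range, nsmul_eq_mul]
    field_simp
    ring
  have hpt : ∀ ω, |(n:ℝ)⁻¹ * ∑ i ∈ Finset.range n, ξ i ω - ∫ ω', ξ 0 ω' ∂P|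
      ≤ (n:ℝ)⁻¹ * ∑ i ∈ Finset.range n, |ψ (ξ i ω)| + K ^ 2 / τ * Z ω ^ 2 + 2 * τ := by
    intro ω
    rw [hdec]
    have e1 : |(n:ℝ)⁻¹ * ∑ i ∈ Finset.range n, ψ (ξ i ω)|
        ≤ (n:ℝ)⁻¹ * ∑ i ∈ Finset.range n, |ψ (ξ i ω)| := by
      rw [abs_mul, abs_of_nonneg (by positivity : (0:ℝ) ≤ (n:ℝ)⁻¹)]
      gcongr
      exact Finset.abs_sum_le_sum_abs _ _
    have e2 : |2 * K * Z ω| ≤ K ^ 2 / τ * Z ω ^ 2 + τ := by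
      have : K ^ 2 / τ * Z ω ^ 2 + τ = ((K * Z ω) ^ 2 + τ ^ 2) / τ := by field_simp
      rw [this, le_div_iff₀ hτ]
      rcases abs_cases (2 * K * Z ω) with ⟨h, -⟩ | ⟨h, -⟩ <;> rw [h] <;>
        nlinarith [sq_nonneg (K * Z ω - τ), sq_nonneg (K * Z ω + τ)]
    have e3 := abs_sub ((n:ℝ)⁻¹ * ∑ i ∈ Finset.range n, ψ (ξ i ω) + 2 * K * Z ω) d
    have e4 := abs_add_le ((n:ℝ)⁻¹ * ∑ i ∈ Finset.range n, ψ (ξ i ω)) (2 * K * Z ω)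
    linarith
  have hI1 : Integrable (fun ω => (n:ℝ)⁻¹ * ∑ i ∈ Finset.range n, |ψ (ξ i ω)|) P :=
    (integrable_finsetSum _ fun i _ => (hintψ i).abs).const_mul _
  have hI : Integrable (fun ω => |(n:ℝ)⁻¹ * ∑ i ∈ Finset.range n, ξ i ω - ∫ ω', ξ 0 ω' ∂P|) P := by
    simp only [hdec]
    exact ((((integrable_finsetSum _ fun i _ => (hintψ i)).const_mul _).add
      ((hZi.integrable (by norm_num)).const_mul _)).sub (integrable_const _)).abs
  refine ⟨hI, ?_⟩
  calc _ ≤ ∫ ω, ((n:ℝ)⁻¹ * ∑ i ∈ Finset.range n, |ψ (ξ i ω)| + K ^ 2 / τ * Z ω ^ 2 + 2 * τ) ∂P :=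
        integral_mono hI ((hI1.add (hZsq.const_mul _)).add (integrable_const _)) hpt
    _ = (n:ℝ)⁻¹ * ∑ i ∈ Finset.range n, ∫ ω, |ψ (ξ i ω)| ∂P + K ^ 2 / τ * ∫ ω, Z ω ^ 2 ∂P
        + 2 * τ := by
        have q1 : Integrable (fun ω => (n:ℝ)⁻¹ * ∑ i ∈ Finset.range n, |ψ (ξ i ω)|
            + K ^ 2 / τ * Z ω ^ 2) P := hI1.add (hZsq.const_mul _)
        rw [integral_add q1 (integrable_const _),
          integral_add hI1 (hZsq.const_mul _), integral_const_mul, integral_const_mul,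
          integral_finsetSum _ fun i _ => (hintψ i).abs]
        simp
    _ ≤ τ + K ^ 2 / τ * (2 * m / n + a) + 2 * τ := by
        gcongr
        simp only [hmean (fun x => |ψ x|) hψ.abs, Finset.sum_const, Finset.card_range,
          nsmul_eq_mul]
        rw [inv_mul_cancel_left₀ hn']
        exact hψτ
    _ = _ := by ring

/-- **Uniform weak law of large numbers for strongly mixing arrays** (Corollary A.2):
for a family, indexed by a nonempty set `ι`, of identically distributed strongly mixing
sequences with uniformly integrable first marginals and uniformly decaying mixing
coefficients, the sample means converge to the expectations in probability, uniformly
over the index set. -/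
theorem uniform_weak_lln
    {ι : Type*} [Nonempty ι]
    (Ω : ι → Type*) [mΩ : ∀ π, MeasurableSpace (Ω π)]
    (P : ∀ π, Measure (Ω π)) (hprob : ∀ π, IsProbabilityMeasure (P π))
    (ξ : ∀ π, ℕ → Ω π → ℝ)
    (hmeas : ∀ π i, Measurable (ξ π i))
    (hint : ∀ π, Integrable (ξ π 0) (P π))
    (hident : ∀ π i, (P π).map (ξ π i) = (P π).map (ξ π 0))
    -- each sequence is strongly mixing
    (hmix : ∀ π, Tendsto (fun n => mixingCoef (P π) (ξ π) n) atTop (nhds 0))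
    -- (i) uniform integrability
    (hi : ∀ ε : ℝ, 0 < ε → ∃ K₀ : ℝ, ∀ K ≥ K₀, ∀ π,
      ∫ ω, Set.indicator {ω' : Ω π | K ≤ |ξ π 0 ω'|} (fun ω' => |ξ π 0 ω'|) ω ∂(P π) ≤ ε)
    -- (ii) uniformly decaying mixing coefficients
    (hii : ∀ ε : ℝ, 0 < ε → ∃ n₀ : ℕ, ∀ n ≥ n₀, ∀ π, mixingCoef (P π) (ξ π) n ≤ ε) :
    ∀ δ : ℝ, 0 < δ →
      Tendsto (fun n : ℕ => ⨆ π,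
          P π {ω : Ω π | δ ≤
              |(n : ℝ)⁻¹ * ∑ i ∈ Finset.range n, ξ π i ω - ∫ ω', ξ π 0 ω' ∂(P π)|})
        atTop (nhds 0) := by
  intro δ hδ
  rw [ENNReal.tendsto_nhds_zero]
  intro ε hε
  obtain ⟨e, he0, hee⟩ : ∃ e : ℝ, 0 < e ∧ ENNReal.ofReal e ≤ ε := by
    rcases eq_or_ne ε ⊤ with rfl | h
    · exact ⟨1, one_pos, le_top⟩
    · exact ⟨ε.toReal, ENNReal.toReal_pos hε.ne' h, ENNReal.ofReal_toReal_le⟩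
  set τ := e * δ / 5 with hτd
  have hτ : 0 < τ := by positivity
  obtain ⟨K₀, hK₀⟩ := hi τ hτ
  set K := max K₀ 1 with hKd
  have hK : 0 < K := lt_of_lt_of_le one_pos (le_max_right _ _)
  set a := τ ^ 2 / K ^ 2 with had
  have ha : 0 < a := by positivity
  obtain ⟨m, hm⟩ := hii a ha
  obtain ⟨N, hN⟩ := exists_nat_gt (2 * m / a)
  filter_upwards [eventually_ge_atTop (N + 1)] with n hn
  have hn0 : 0 < n := by omega
  have hnR : (0:ℝ) < n := by exact_mod_cast hn0
  have hmn : 2 * (m:ℝ) / n ≤ a := by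
    rw [div_le_iff₀ hnR]
    rw [div_lt_iff₀ ha] at hN
    have : (N:ℝ) ≤ n := by exact_mod_cast (by omega : N ≤ n)
    nlinarith
  refine iSup_le fun π => ?_
  have := hprob π
  obtain ⟨hI, hB⟩ := l1_bound (P π) (ξ π) (hmeas π) (hint π) (hident π) K hK τ hτ
    (hK₀ K (le_max_left _ _) π) m a ha.le (hm m le_rfl π) n hn0
  have hB' : ∫ ω, |(n:ℝ)⁻¹ * ∑ i ∈ Finset.range n, ξ π i ω - ∫ ω', ξ π 0 ω' ∂(P π)| ∂(P π)
      ≤ e * δ := by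
    refine hB.trans ?_
    calc _ ≤ 3 * τ + K ^ 2 / τ * (a + a) := by gcongr
      _ = e * δ := by
        rw [had]
        have : K ^ 2 / τ * (τ ^ 2 / K ^ 2 + τ ^ 2 / K ^ 2) = 2 * τ := by field_simp; ring
        rw [this, hτd]; ring
  have hM := mul_meas_ge_le_integral_of_nonneg (Eventually.of_forall fun ω => abs_nonneg _) hI δ
  refine le_trans ?_ hee
  rw [ENNReal.le_ofReal_iff_toReal_le (measure_ne_top _ _) he0.le]
  exact le_of_mul_le_mul_left ((hM.trans hB').trans_eq (mul_comm _ _)) hδ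
end

section
/- Let a₀ ≠ 0, a ≠ 0 and |q| < 1, and define a_s := a q^s for s ≥ 1. Then for all complex z with |z| ≤ 1 and 1 − qz ≠ 0 one has ∑_{s=0}^∞ a_s z^s = (a₀ − (a₀−a)q·z)/(1 − qz), and the reciprocal 1/∑_{s=0}^∞ a_s z^s admits (as a formal power series, convergent in a neighborhood of 0) the representation ∑_{s=0}^∞ b_s z^s with b₀ = 1/a₀ and b_s = −a (a₀−a)^{s−1} a₀^{−(s+1)} q^s for s ≥ 1 (with the convention 0⁰ := 1). Moreover, if specifically a₀ = 1, a = (φ₁+θ₁)/φ₁ and q = φ₁ for real numbers φ₁, θ₁ with 0 < |φ₁| < 1 and |θ₁| < 1, then ∑_{s=0}^∞ |b_s| = 1 + |φ₁+θ₁|/(1−|θ₁|). -/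
open Filter Topology

/-- **Reciprocal power series of a geometric tail sequence** (Example B.3): for
`a_0 ≠ 0`, `a ≠ 0`, `|q| < 1` and `a_s = a q^s` (`s ≥ 1`), the power series
`∑ a_s z^s` equals `(a₀ − (a₀−a)q z)/(1 − q z)` on the closed unit disc, its reciprocal
power series has coefficients `b₀ = 1/a₀`, `b_s = −a (a₀−a)^{s−1} a₀^{−(s+1)} q^s`, and
in the ARMA(1,1) case `a₀ = 1`, `a = (φ₁+θ₁)/φ₁`, `q = φ₁` one has
`∑_s |b_s| = 1 + |φ₁+θ₁|/(1−|θ₁|)`. -/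
theorem reciprocal_power_series_geometric
    (a₀ aa q : ℝ) (ha₀ : a₀ ≠ 0) (haa : aa ≠ 0) (hq : |q| < 1)
    (a : ℕ → ℝ) (ha0 : a 0 = a₀) (has : ∀ s : ℕ, 1 ≤ s → a s = aa * q ^ s)
    (b : ℕ → ℝ) (hb0 : b 0 = 1 / a₀)
    (hbs : ∀ s : ℕ, 1 ≤ s →
      b s = -aa * (a₀ - aa) ^ (s - 1) * a₀ ^ (-((s : ℤ) + 1)) * q ^ s) :
    -- the closed form of the power series on the closed unit disc
    (∀ z : ℂ, ‖z‖ ≤ 1 → (1 : ℂ) - (q : ℂ) * z ≠ 0 →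
      (∑' s : ℕ, (a s : ℂ) * z ^ s) =
        ((a₀ : ℂ) - ((a₀ : ℂ) - (aa : ℂ)) * (q : ℂ) * z) / (1 - (q : ℂ) * z)) ∧
    -- (b_s) is the reciprocal power series of (a_s) ...
    (∀ n : ℕ, (∑ i ∈ Finset.range (n + 1), a i * b (n - i)) = if n = 0 then 1 else 0) ∧
    -- ... convergent in a neighborhood of 0
    (∃ r : ℝ, 0 < r ∧ ∀ z : ℂ, ‖z‖ < r → Summable fun s : ℕ => (b s : ℂ) * z ^ s) ∧
    -- the ARMA(1,1) special case
    (∀ φ₁ θ₁ : ℝ, 0 < |φ₁| → |φ₁| < 1 → |θ₁| < 1 →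
      a₀ = 1 → aa = (φ₁ + θ₁) / φ₁ → q = φ₁ →
      (∑' s : ℕ, |b s|) = 1 + |φ₁ + θ₁| / (1 - |θ₁|)) := by
  have hbs' : ∀ m : ℕ, b (m + 1) = (-aa * q / a₀ ^ 2) * ((a₀ - aa) * q / a₀) ^ m := by
    intro m
    have hz : a₀ ^ (-(((m + 1 : ℕ) : ℤ) + 1)) = (a₀ ^ (m + 2))⁻¹ := by
      rw [zpow_neg]
      congr 1
    rw [hbs (m + 1) (by omega), hz, Nat.add_sub_cancel, div_pow, mul_pow]
    field_simp
    ring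
  refine ⟨?_, ?_, ?_, ?_⟩
  · intro z hz hne
    have hn : ‖(q : ℂ) * z‖ < 1 := by
      rw [norm_mul, Complex.norm_real, Real.norm_eq_abs]
      nlinarith [abs_nonneg q, norm_nonneg z]
    have h1 : HasSum (fun s : ℕ => (a (s + 1) : ℂ) * z ^ (s + 1))
        ((aa * q * z) * (1 - (q : ℂ) * z)⁻¹) := by
      have h := (hasSum_geometric_of_norm_lt_one hn).mul_left ((aa : ℂ) * q * z)
      refine h.congr_fun ?_
      intro s
      rw [has (s + 1) (by omega)]
      push_cast
      ring
    have h2 := (hasSum_nat_add_iff (f := fun s : ℕ => (a s : ℂ) * z ^ s) 1).1 h1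
    rw [h2.tsum_eq]
    simp only [Finset.sum_range_one, ha0, pow_zero, mul_one]
    field_simp
    ring
  · have key : ∀ n : ℕ, aa * ∑ j ∈ Finset.range (n + 1), b j * q ^ (n + 1 - j)
        = -a₀ * b (n + 1) := by
      intro n
      induction n with
      | zero =>
        rw [hbs' 0]
        simp [hb0]
        field_simp
      | succ n ih =>
        rw [Finset.sum_range_succ]
        have : ∑ j ∈ Finset.range (n + 1), b j * q ^ (n + 1 + 1 - j)
            = q * ∑ j ∈ Finset.range (n + 1), b j * q ^ (n + 1 - j) := by
          rw [Finset.mul_sum]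
          refine Finset.sum_congr rfl fun j hj => ?_
          have : n + 1 + 1 - j = (n + 1 - j) + 1 := by
            have := Finset.mem_range.1 hj
            omega
          rw [this, pow_succ]
          ring
        rw [this, mul_add, mul_left_comm, ih, hbs' n, hbs' (n + 1), pow_succ _ n]
        have h1 : n + 1 + 1 - (n + 1) = 1 := by omega
        rw [h1]
        generalize ((a₀ - aa) * q / a₀) ^ n = t
        field_simp
        ring
    intro n
    rw [← Finset.sum_range_reflect]
    rcases n with _ | n
    · simp [ha0, hb0, ha₀]
    · rw [Finset.sum_range_succ]
      have : ∑ j ∈ Finset.range (n + 1), a (n + 1 + 1 - 1 - j) * b (n + 1 - (n + 1 + 1 - 1 - j))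
          = aa * ∑ j ∈ Finset.range (n + 1), b j * q ^ (n + 1 - j) := by
        rw [Finset.mul_sum]
        refine Finset.sum_congr rfl fun j hj => ?_
        have hj' := Finset.mem_range.1 hj
        have e1 : n + 1 + 1 - 1 - j = n + 1 - j := by omega
        have e2 : n + 1 - (n + 1 - j) = j := by omega
        rw [e1, e2, has _ (by omega)]
        ring
      rw [this, key]
      simp [ha0]
  · set ρ := (a₀ - aa) * q / a₀ with hρ
    refine ⟨1 / (|ρ| + 1), by positivity, ?_⟩
    intro z hz
    have hn : ‖(ρ : ℂ) * z‖ < 1 := by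
      rw [norm_mul, Complex.norm_real, Real.norm_eq_abs]
      rw [lt_div_iff₀ (by positivity)] at hz
      nlinarith [abs_nonneg ρ, norm_nonneg z]
    rw [← summable_nat_add_iff 1]
    have h := (summable_geometric_of_norm_lt_one hn).mul_left
      (((-aa * q / a₀ ^ 2 : ℝ) : ℂ) * z)
    refine h.congr ?_
    intro s
    rw [hbs' s, Complex.ofReal_mul, Complex.ofReal_pow]
    ring
  · intro φ θ hφ hφ1 hθ h1 h2 h3
    have hφ0 : φ ≠ 0 := abs_pos.1 hφ
    have hb : ∀ m, |b (m + 1)| = |φ + θ| * |θ| ^ m := by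
      intro m
      have e1 : -aa * q / a₀ ^ 2 = -(φ + θ) := by
        rw [h1, h2, h3]
        field_simp
      have e2 : (a₀ - aa) * q / a₀ = -θ := by
        rw [h1, h2, h3]
        field_simp
        ring
      rw [hbs', e1, e2, abs_mul, abs_pow, abs_neg, abs_neg]
    have hs : HasSum (fun m => |b (m + 1)|) (|φ + θ| * (1 - |θ|)⁻¹) := by
      simp only [hb]
      exact (hasSum_geometric_of_lt_one (abs_nonneg θ) hθ).mul_left _
    have h4 := (hasSum_nat_add_iff (f := fun s : ℕ => |b s|) 1).1 hs
    rw [h4.tsum_eq]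
    simp [hb0, h1, div_eq_mul_inv, add_comm]
end

section
/- Let μ, ν be probability measures on ℝ with finite first moments and distribution functions F_μ, F_ν. Then |∫ y μ(dy) − ∫ y ν(dy)| ≤ ∫_ℝ |F_μ(y) − F_ν(y)| dy. Consequently, if φ is a u-shaped function with ∫_ℝ 1/φ(y) dy < ∞, then for all μ, ν ∈ 𝓜₁^(φ)(ℝ) with finite first moments: |∫ y μ(dy) − ∫ y ν(dy)| ≤ d_(φ)(μ,ν) · ∫_ℝ 1/φ(y) dy; in particular the mean functional T⁽¹⁾(μ) := ∫ y μ(dy) is continuous on 𝓜₁^(φ)(ℝ) w.r.t. d_(φ). -/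
open MeasureTheory Filter Topology

/-- The Kolmogorov `φ`-distance `sup_y |F_μ(y) − F_ν(y)| φ(y)` (with values in `ℝ≥0∞`). -/
noncomputable def dphi (φ : ℝ → ℝ) (μ ν : Measure ℝ) : ENNReal :=
  ⨆ y : ℝ, ENNReal.ofReal (|cdfR μ y - cdfR ν y| * φ y)

/-- The Fubini kernel `1_{0 ≤ y} - 1_{x ≤ y}`. -/
noncomputable def meanKer (x y : ℝ) : ℝ :=
  (Set.Ici (0:ℝ)).indicator (fun _ => (1:ℝ)) y - (Set.Iic y).indicator (fun _ => (1:ℝ)) x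

lemma meanKer_of_nonneg {x : ℝ} (hx : 0 ≤ x) :
    meanKer x = (Set.Ico 0 x).indicator (fun _ => (1:ℝ)) := by
  funext y
  simp only [meanKer, Set.indicator_apply, Set.mem_Ici, Set.mem_Iic, Set.mem_Ico]
  split_ifs <;> grind

lemma meanKer_of_neg {x : ℝ} (hx : x < 0) :
    meanKer x = (Set.Ico x 0).indicator (fun _ => (-1:ℝ)) := by
  funext y
  simp only [meanKer, Set.indicator_apply, Set.mem_Ici, Set.mem_Iic, Set.mem_Ico]
  split_ifs <;> grind

lemma meanKer_integrable (x : ℝ) : Integrable (meanKer x) := by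
  rcases le_or_gt 0 x with hx | hx
  · rw [meanKer_of_nonneg hx]
    exact (integrable_indicator_iff measurableSet_Ico).2 (integrableOn_const (by simp))
  · rw [meanKer_of_neg hx]
    exact (integrable_indicator_iff measurableSet_Ico).2 (integrableOn_const (by simp))

lemma meanKer_integral (x : ℝ) : ∫ y, meanKer x y = x := by
  rcases le_or_gt 0 x with hx | hx
  · rw [meanKer_of_nonneg hx, integral_indicator measurableSet_Ico]
    simp [hx]
  · rw [meanKer_of_neg hx, integral_indicator measurableSet_Ico]
    simp [hx.le]

lemma meanKer_integral_norm (x : ℝ) : ∫ y, ‖meanKer x y‖ = |x| := by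
  rcases le_or_gt 0 x with hx | hx
  · simp_rw [meanKer_of_nonneg hx, norm_indicator_eq_indicator_norm]
    rw [integral_indicator measurableSet_Ico]
    simp [hx, abs_of_nonneg hx]
  · simp_rw [meanKer_of_neg hx, norm_indicator_eq_indicator_norm]
    rw [integral_indicator measurableSet_Ico]
    simp [hx.le, abs_of_neg hx]

lemma meanKer_measurable : Measurable (Function.uncurry meanKer) := by
  have h : Function.uncurry meanKer = fun p : ℝ × ℝ =>
      ({p : ℝ × ℝ | 0 ≤ p.2}).indicator (fun _ => (1:ℝ)) p -
      ({p : ℝ × ℝ | p.1 ≤ p.2}).indicator (fun _ => (1:ℝ)) p := by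
    funext p
    simp [Function.uncurry, meanKer, Set.indicator_apply]
  rw [h]
  exact (measurable_const.indicator (measurableSet_le measurable_const measurable_snd)).sub
    (measurable_const.indicator (measurableSet_le measurable_fst measurable_snd))

lemma meanKer_integral_left (μ : Measure ℝ) [IsProbabilityMeasure μ] (y : ℝ) :
    ∫ x, meanKer x y ∂μ = (Set.Ici (0:ℝ)).indicator (fun _ => (1:ℝ)) y - cdfR μ y := by
  unfold meanKer
  rw [integral_sub (integrable_const _)
    ((integrable_const _).indicator measurableSet_Iic), integral_indicator measurableSet_Iic]
  simp [cdfR, measureReal_def]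

lemma mean_aux (μ : Measure ℝ) [IsProbabilityMeasure μ] (hμ : Integrable (fun y : ℝ => y) μ) :
    Integrable (fun y => (Set.Ici (0:ℝ)).indicator (fun _ => (1:ℝ)) y - cdfR μ y) ∧
    ∫ y, ((Set.Ici (0:ℝ)).indicator (fun _ => (1:ℝ)) y - cdfR μ y) = ∫ y, y ∂μ := by
  have hI : Integrable (Function.uncurry meanKer) (μ.prod volume) := by
    rw [integrable_prod_iff meanKer_measurable.aestronglyMeasurable]
    refine ⟨Eventually.of_forall fun x => meanKer_integrable x, ?_⟩
    simp only [Function.uncurry, meanKer_integral_norm]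
    exact hμ.abs
  have h1 := hI.integral_prod_right
  have h2 := integral_integral_swap hI
  simp only [Function.uncurry, meanKer_integral_left] at h1
  simp only [meanKer_integral_left, meanKer_integral] at h2
  exact ⟨h1, h2.symm⟩

lemma mean_diff (μ ν : Measure ℝ) [IsProbabilityMeasure μ] [IsProbabilityMeasure ν]
    (hμ : Integrable (fun y : ℝ => y) μ) (hν : Integrable (fun y : ℝ => y) ν) :
    Integrable (fun y => |cdfR μ y - cdfR ν y|) ∧
    |(∫ y, y ∂μ) - ∫ y, y ∂ν| ≤ (∫ y : ℝ, |cdfR μ y - cdfR ν y|) := by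
  obtain ⟨a1, a2⟩ := mean_aux μ hμ
  obtain ⟨b1, b2⟩ := mean_aux ν hν
  have e : ∀ y, |((Set.Ici (0:ℝ)).indicator (fun _ => (1:ℝ)) y - cdfR μ y) -
      ((Set.Ici (0:ℝ)).indicator (fun _ => (1:ℝ)) y - cdfR ν y)| = |cdfR μ y - cdfR ν y| := by
    intro y
    rw [sub_sub_sub_cancel_left, abs_sub_comm]
  constructor
  · have h := (a1.sub b1).abs
    simpa only [Pi.sub_apply, e] using h
  · rw [← a2, ← b2, ← integral_sub a1 b1]
    refine (abs_integral_le_integral_abs).trans (le_of_eq ?_)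
    simp only [e]

lemma mean_dphi (μ ν : Measure ℝ) [IsProbabilityMeasure μ] [IsProbabilityMeasure ν]
    (hμ : Integrable (fun y : ℝ => y) μ) (hν : Integrable (fun y : ℝ => y) ν)
    (φ : ℝ → ℝ) (hφc : Continuous φ) (hφ1 : ∀ y : ℝ, 1 ≤ φ y)
    (hφint : Integrable (fun y : ℝ => 1 / φ y)) :
    ENNReal.ofReal |(∫ y, y ∂μ) - ∫ y, y ∂ν| ≤
      dphi φ μ ν * ENNReal.ofReal (∫ y : ℝ, 1 / φ y) := by
  obtain ⟨hI, hle⟩ := mean_diff μ ν hμ hν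
  have hpos : ∀ y, 0 < φ y := fun y => lt_of_lt_of_le one_pos (hφ1 y)
  refine (ENNReal.ofReal_le_ofReal hle).trans ?_
  rw [ofReal_integral_eq_lintegral_ofReal hI (Eventually.of_forall fun y => abs_nonneg _),
    ofReal_integral_eq_lintegral_ofReal hφint
      (Eventually.of_forall fun y => (one_div_pos.2 (hpos y)).le),
    ← lintegral_const_mul _ (by
      exact (measurable_const.div hφc.measurable).ennreal_ofReal)]
  refine lintegral_mono fun y => ?_
  have h : |cdfR μ y - cdfR ν y| = (|cdfR μ y - cdfR ν y| * φ y) * (1 / φ y) := by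
    field_simp [(hpos y).ne']
  rw [h, ENNReal.ofReal_mul (mul_nonneg (abs_nonneg _) (hpos y).le)]
  gcongr
  exact le_iSup (fun y : ℝ => ENNReal.ofReal (|cdfR μ y - cdfR ν y| * φ y)) y

/-- **Continuity of the mean functional w.r.t. `d_(φ)`** (Example 3.4 (ii)): for probability
measures with finite first moments, `|∫y dμ − ∫y dν| ≤ ∫|F_μ − F_ν| dy`; hence if `1/φ` is
integrable, `|∫y dμ − ∫y dν| ≤ d_(φ)(μ,ν) ∫ 1/φ dy` for `μ, ν ∈ 𝓜₁^(φ)(ℝ)`, and the mean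
functional is continuous w.r.t. `d_(φ)`. -/
theorem mean_functional_kolmogorov_phi
    (μ ν : Measure ℝ) [IsProbabilityMeasure μ] [IsProbabilityMeasure ν]
    (hμint : Integrable (fun y : ℝ => y) μ) (hνint : Integrable (fun y : ℝ => y) ν)
    (φ : ℝ → ℝ) (hφc : Continuous φ) (hφ1 : ∀ y : ℝ, 1 ≤ φ y)
    (hφdec : AntitoneOn φ (Set.Iio 0)) (hφinc : MonotoneOn φ (Set.Ioi 0))
    (hφint : Integrable (fun y : ℝ => 1 / φ y))
    (hμφ : dphi φ μ (Measure.dirac 0) ≠ ⊤) (hνφ : dphi φ ν (Measure.dirac 0) ≠ ⊤) :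
    |(∫ y, y ∂μ) - ∫ y, y ∂ν| ≤ (∫ y : ℝ, |cdfR μ y - cdfR ν y|) ∧
    ENNReal.ofReal |(∫ y, y ∂μ) - ∫ y, y ∂ν| ≤
      dphi φ μ ν * ENNReal.ofReal (∫ y : ℝ, 1 / φ y) ∧
    ∀ ε : ℝ, 0 < ε → ∃ δ : ℝ, 0 < δ ∧ ∀ ν' : Measure ℝ, IsProbabilityMeasure ν' →
      Integrable (fun y : ℝ => y) ν' → dphi φ ν' (Measure.dirac 0) ≠ ⊤ →
      dphi φ μ ν' ≤ ENNReal.ofReal δ → |(∫ y, y ∂μ) - ∫ y, y ∂ν'| ≤ ε := by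
  refine ⟨(mean_diff μ ν hμint hνint).2, mean_dphi μ ν hμint hνint φ hφc hφ1 hφint, ?_⟩
  intro ε hε
  have hC : 0 ≤ ∫ y : ℝ, 1 / φ y := integral_nonneg fun y =>
    (one_div_pos.2 (lt_of_lt_of_le one_pos (hφ1 y))).le
  set C := ∫ y : ℝ, 1 / φ y with hCdef
  refine ⟨ε / (C + 1), by positivity, ?_⟩
  intro ν' hν' hint _ hd
  have h := mean_dphi μ ν' hμint hint φ hφc hφ1 hφint
  rw [← hCdef] at h
  have h2 : ENNReal.ofReal |(∫ y, y ∂μ) - ∫ y, y ∂ν'| ≤ ENNReal.ofReal (ε / (C + 1) * C) := by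
    rw [ENNReal.ofReal_mul (by positivity)]
    exact h.trans (by gcongr)
  rw [ENNReal.ofReal_le_ofReal_iff (by positivity)] at h2
  refine h2.trans ?_
  rw [div_mul_eq_mul_div, div_le_iff₀ (by positivity)]
  nlinarith
end

section
/- Let μ, ν be probability measures on ℝ with finite second moments and distribution functions F_μ, F_ν. Then |∫ y² μ(dy) − ∫ y² ν(dy)| ≤ 2 ∫_ℝ |F_μ(y) − F_ν(y)| |y| dy. Consequently, if φ is a u-shaped function with ∫_ℝ |y|/φ(y) dy < ∞, then for all μ, ν ∈ 𝓜₁^(φ)(ℝ) with finite second moments: |∫ y² μ(dy) − ∫ y² ν(dy)| ≤ 2 d_(φ)(μ,ν) · ∫_ℝ |y|/φ(y) dy; in particular the second moment functional T⁽²⁾(μ) := ∫ y² μ(dy) is continuous on 𝓜₁^(φ)(ℝ) w.r.t. d_(φ). -/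
open MeasureTheory Filter Topology

/-- Tonelli kernel: `∫ k x y dy = x ^ 2`. -/
noncomputable def kernelK (x y : ℝ) : ℝ :=
  2 * y * ((if 0 ≤ y then 1 else 0) - (if x ≤ y then 1 else 0))

lemma kernelK_nonneg (x y : ℝ) : 0 ≤ kernelK x y := by
  unfold kernelK
  split_ifs <;> nlinarith

lemma kernelK_measurable : Measurable (Function.uncurry kernelK) := by
  unfold kernelK Function.uncurry
  refine Measurable.mul (by fun_prop) (Measurable.sub ?_ ?_)
  · exact Measurable.ite (measurableSet_le measurable_const measurable_snd)
      measurable_const measurable_const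
  · exact Measurable.ite (measurableSet_le measurable_fst measurable_snd)
      measurable_const measurable_const

lemma kernelK_right (x : ℝ) : Integrable (kernelK x) ∧ ∫ y, kernelK x y = x ^ 2 := by
  rcases le_total 0 x with hx | hx
  · have h : kernelK x = (Set.Ico 0 x).indicator (fun y => 2 * y) := by
      ext y
      by_cases h1 : 0 ≤ y <;> by_cases h2 : x ≤ y <;>
        simp [kernelK, Set.indicator, h1, h2, not_lt.mpr, not_le.mp]
      linarith
    rw [h]
    constructor
    · rw [integrable_indicator_iff measurableSet_Ico]
      exact ((by fun_prop : Continuous fun y : ℝ => 2 * y).integrableOn_Icc).mono_set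
        Set.Ico_subset_Icc_self
    · rw [integral_indicator measurableSet_Ico, integral_Ico_eq_integral_Ioc,
        ← intervalIntegral.integral_of_le hx, intervalIntegral.integral_const_mul, integral_id]
      ring
  · have h : kernelK x = (Set.Ico x 0).indicator (fun y => -2 * y) := by
      ext y
      by_cases h1 : 0 ≤ y <;> by_cases h2 : x ≤ y <;>
        simp [kernelK, Set.indicator, h1, h2, not_lt.mpr, not_le.mp]
      linarith
    rw [h]
    constructor
    · rw [integrable_indicator_iff measurableSet_Ico]
      exact ((by fun_prop : Continuous fun y : ℝ => -2 * y).integrableOn_Icc).mono_set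
        Set.Ico_subset_Icc_self
    · rw [integral_indicator measurableSet_Ico, integral_Ico_eq_integral_Ioc,
        ← intervalIntegral.integral_of_le hx, intervalIntegral.integral_const_mul, integral_id]
      ring

lemma kernelK_left (μ : Measure ℝ) [IsProbabilityMeasure μ] (y : ℝ) :
    ∫ x, kernelK x y ∂μ = 2 * y * ((if 0 ≤ y then 1 else 0) - cdfR μ y) := by
  have h : (fun x : ℝ => if x ≤ y then (1 : ℝ) else 0) = (Set.Iic y).indicator 1 := by
    ext x; simp [Set.indicator]
  unfold kernelK
  rw [integral_const_mul, integral_sub (integrable_const _), h,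
    integral_indicator_one measurableSet_Iic]
  · simp [cdfR, Measure.real]
  · rw [h]
    exact (integrable_const (1 : ℝ)).indicator measurableSet_Iic

lemma second_moment_repr (μ : Measure ℝ) [IsProbabilityMeasure μ]
    (hμ : Integrable (fun y : ℝ => y ^ 2) μ) :
    Integrable (fun y : ℝ => 2 * y * ((if 0 ≤ y then 1 else 0) - cdfR μ y)) ∧
    ∫ y, y ^ 2 ∂μ = ∫ y : ℝ, 2 * y * ((if 0 ≤ y then 1 else 0) - cdfR μ y) := by
  have hint : Integrable (Function.uncurry kernelK) (μ.prod volume) := by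
    rw [integrable_prod_iff kernelK_measurable.aestronglyMeasurable]
    refine ⟨ae_of_all _ fun x => (kernelK_right x).1, ?_⟩
    refine hμ.congr (ae_of_all _ fun x => ?_)
    simp only [Function.uncurry, Real.norm_of_nonneg (kernelK_nonneg _ _)]
    exact (kernelK_right x).2.symm
  constructor
  · have := hint.integral_prod_right
    simpa only [Function.uncurry, kernelK_left] using this
  · have := integral_integral_swap hint
    simpa only [kernelK_left, (kernelK_right _).2] using this

lemma second_moment_bound (μ ν : Measure ℝ) [IsProbabilityMeasure μ] [IsProbabilityMeasure ν]
    (hμ : Integrable (fun y : ℝ => y ^ 2) μ) (hν : Integrable (fun y : ℝ => y ^ 2) ν) :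
    Integrable (fun y : ℝ => |cdfR μ y - cdfR ν y| * |y|) ∧
    |(∫ y, y ^ 2 ∂μ) - ∫ y, y ^ 2 ∂ν| ≤ 2 * (∫ y : ℝ, |cdfR μ y - cdfR ν y| * |y|) := by
  obtain ⟨i1, e1⟩ := second_moment_repr μ hμ
  obtain ⟨i2, e2⟩ := second_moment_repr ν hν
  have key : ∀ y : ℝ, |2 * y * ((if 0 ≤ y then 1 else 0) - cdfR μ y)
      - 2 * y * ((if 0 ≤ y then 1 else 0) - cdfR ν y)| = 2 * (|cdfR μ y - cdfR ν y| * |y|) := by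
    intro y
    rw [← mul_sub, sub_sub_sub_cancel_left, abs_mul, abs_mul, abs_sub_comm, abs_two]
    ring
  constructor
  · have := ((i1.sub i2).abs).const_mul (1 / 2)
    refine this.congr (ae_of_all _ fun y => ?_)
    simp only [Pi.sub_apply, key]
    ring
  · rw [e1, e2, ← integral_sub i1 i2, ← integral_const_mul]
    refine (abs_integral_le_integral_abs).trans (le_of_eq ?_)
    simp only [key]

lemma second_moment_dphi (μ ν : Measure ℝ) [IsProbabilityMeasure μ] [IsProbabilityMeasure ν]
    (hμ : Integrable (fun y : ℝ => y ^ 2) μ) (hν : Integrable (fun y : ℝ => y ^ 2) ν)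
    (φ : ℝ → ℝ) (hφ1 : ∀ y : ℝ, 1 ≤ φ y) (hφint : Integrable (fun y : ℝ => |y| / φ y)) :
    ENNReal.ofReal |(∫ y, y ^ 2 ∂μ) - ∫ y, y ^ 2 ∂ν| ≤
      2 * dphi φ μ ν * ENNReal.ofReal (∫ y : ℝ, |y| / φ y) := by
  obtain ⟨hi, hb⟩ := second_moment_bound μ ν hμ hν
  have hp : ∀ y, 0 < φ y := fun y => zero_lt_one.trans_le (hφ1 y)
  refine (ENNReal.ofReal_le_ofReal hb).trans ?_
  rw [ENNReal.ofReal_mul zero_le_two, ENNReal.ofReal_ofNat, mul_assoc]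
  gcongr
  rw [ofReal_integral_eq_lintegral_ofReal hi (ae_of_all _ fun y => by positivity),
    ofReal_integral_eq_lintegral_ofReal hφint
      (ae_of_all _ fun y => div_nonneg (abs_nonneg y) (hp y).le),
    ← lintegral_const_mul'' _ hφint.aemeasurable.ennreal_ofReal]
  refine lintegral_mono fun y => ?_
  have : |cdfR μ y - cdfR ν y| * |y| = (|cdfR μ y - cdfR ν y| * φ y) * (|y| / φ y) := by
    have := (hp y).ne'
    field_simp
  simp only [this]
  rw [ENNReal.ofReal_mul (mul_nonneg (abs_nonneg _) (hp y).le)]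
  gcongr
  exact le_iSup (fun y => ENNReal.ofReal (|cdfR μ y - cdfR ν y| * φ y)) y

/-- **Continuity of the second moment functional w.r.t. `d_(φ)`** (Example 3.4 (iii)): for
probability measures with finite second moments,
`|∫y² dμ − ∫y² dν| ≤ 2 ∫|F_μ − F_ν| |y| dy`; hence if `|y|/φ(y)` is integrable,
`|∫y² dμ − ∫y² dν| ≤ 2 d_(φ)(μ,ν) ∫ |y|/φ(y) dy` for `μ, ν ∈ 𝓜₁^(φ)(ℝ)`, and the second
moment functional is continuous w.r.t. `d_(φ)`. -/
theorem second_moment_functional_kolmogorov_phi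
    (μ ν : Measure ℝ) [IsProbabilityMeasure μ] [IsProbabilityMeasure ν]
    (hμint : Integrable (fun y : ℝ => y ^ 2) μ) (hνint : Integrable (fun y : ℝ => y ^ 2) ν)
    (φ : ℝ → ℝ) (hφc : Continuous φ) (hφ1 : ∀ y : ℝ, 1 ≤ φ y)
    (hφdec : AntitoneOn φ (Set.Iio 0)) (hφinc : MonotoneOn φ (Set.Ioi 0))
    (hφint : Integrable (fun y : ℝ => |y| / φ y))
    (hμφ : dphi φ μ (Measure.dirac 0) ≠ ⊤) (hνφ : dphi φ ν (Measure.dirac 0) ≠ ⊤) :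
    |(∫ y, y ^ 2 ∂μ) - ∫ y, y ^ 2 ∂ν| ≤ 2 * (∫ y : ℝ, |cdfR μ y - cdfR ν y| * |y|) ∧
    ENNReal.ofReal |(∫ y, y ^ 2 ∂μ) - ∫ y, y ^ 2 ∂ν| ≤
      2 * dphi φ μ ν * ENNReal.ofReal (∫ y : ℝ, |y| / φ y) ∧
    ∀ ε : ℝ, 0 < ε → ∃ δ : ℝ, 0 < δ ∧ ∀ ν' : Measure ℝ, IsProbabilityMeasure ν' →
      Integrable (fun y : ℝ => y ^ 2) ν' → dphi φ ν' (Measure.dirac 0) ≠ ⊤ →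
      dphi φ μ ν' ≤ ENNReal.ofReal δ → |(∫ y, y ^ 2 ∂μ) - ∫ y, y ^ 2 ∂ν'| ≤ ε := by
  refine ⟨(second_moment_bound μ ν hμint hνint).2,
    second_moment_dphi μ ν hμint hνint φ hφ1 hφint, fun ε hε => ?_⟩
  have hI : 0 ≤ ∫ y : ℝ, |y| / φ y :=
    integral_nonneg fun y => div_nonneg (abs_nonneg y) (zero_le_one.trans (hφ1 y))
  set I := ∫ y : ℝ, |y| / φ y with hIdef
  refine ⟨ε / (2 * (I + 1)), by positivity, fun ν' hν' hi _ hd => ?_⟩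
  have h := second_moment_dphi μ ν' hμint hi φ hφ1 hφint
  rw [← hIdef] at h
  have h2 : 2 * dphi φ μ ν' * ENNReal.ofReal I ≤ ENNReal.ofReal ε := by
    calc 2 * dphi φ μ ν' * ENNReal.ofReal I
        ≤ ENNReal.ofReal 2 * ENNReal.ofReal (ε / (2 * (I + 1))) * ENNReal.ofReal I := by
          rw [ENNReal.ofReal_ofNat]; gcongr
      _ = ENNReal.ofReal (2 * (ε / (2 * (I + 1))) * I) := by
          rw [ENNReal.ofReal_mul (by positivity), ENNReal.ofReal_mul zero_le_two]
      _ ≤ ENNReal.ofReal ε := by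
          apply ENNReal.ofReal_le_ofReal
          have : 2 * (ε / (2 * (I + 1))) * I = ε * I / (I + 1) := by field_simp
          rw [this, div_le_iff₀ (by positivity)]
          nlinarith
  exact (ENNReal.ofReal_le_ofReal_iff hε.le).1 (h.trans h2)
end

section
/- Fix 0 < c < 1. For real numbers φ₁, θ₁ with |φ₁|, |θ₁| ≤ c and φ₁ ≠ −θ₁, let a(φ₁,θ₁) = (a_s(φ₁,θ₁))_{s∈ℕ₀} be given by a₀ = 1 and a_s = (φ₁+θ₁)φ₁^{s−1} for s ≥ 1 (the MA(∞) coefficients of the ARMA(1,1) process with these parameters), and let b_s(a) denote the coefficient of z^s in the power series expansion of z ↦ 1/∑_{s=0}^∞ a_s z^s. Let A'_c := {a(φ₁,θ₁) : |φ₁|,|θ₁| ≤ c, φ₁ ≠ −θ₁}. Then: (i) ∑_{s=0}^∞ a_s z^s ≠ 0 for all complex z with |z| ≤ 1, for every a ∈ A'_c; (ii) sup_{a∈A'_c} ∑_{u=n}^∞ ∑_{s=u}^∞ |a_s| ≤ (2/(1−c)²) c^n for all n ∈ ℕ; (iii) sup_{a∈A'_c} ∑_{s=0}^∞ |b_s(a)|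 ≤ 1 + 2c/(1−c). -/
open Filter Topology

/-- The MA(∞) coefficient sequence of the ARMA(1,1) process with parameters `φ₁, θ₁`:
`a₀ = 1` and `a_s = (φ₁+θ₁) φ₁^{s−1}` for `s ≥ 1`. -/
noncomputable def armaCoeff (φ₁ θ₁ : ℝ) : ℕ → ℝ :=
  fun s => if s = 0 then 1 else (φ₁ + θ₁) * φ₁ ^ (s - 1)

theorem arma_abs_le (c φ₁ θ₁ : ℝ) (hc0 : 0 < c) (h1 : |φ₁| ≤ c) (h2 : |θ₁| ≤ c) (s : ℕ) (hs : 1 ≤ s) :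
    |armaCoeff φ₁ θ₁ s| ≤ 2 * c ^ s := by
  obtain ⟨k, rfl⟩ : ∃ k, s = k + 1 := ⟨s - 1, by omega⟩
  have e : armaCoeff φ₁ θ₁ (k + 1) = (φ₁ + θ₁) * φ₁ ^ k := by simp [armaCoeff]
  rw [e, abs_mul, abs_pow]
  have h3 : |φ₁ + θ₁| ≤ 2 * c := (abs_add_le _ _).trans (by linarith)
  calc |φ₁ + θ₁| * |φ₁| ^ k ≤ (2 * c) * c ^ k := by gcongr
    _ = 2 * c ^ (k + 1) := by ring

theorem arma_tail (c φ₁ θ₁ : ℝ) (hc0 : 0 < c) (hc1 : c < 1) (h1 : |φ₁| ≤ c) (h2 : |θ₁| ≤ c)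
    (m : ℕ) (hm : 1 ≤ m) :
    (∑' s : ℕ, |armaCoeff φ₁ θ₁ (m + s)|) ≤ 2 * c ^ m * (1 - c)⁻¹ := by
  have hg := (hasSum_geometric_of_lt_one hc0.le hc1).mul_left (2 * c ^ m)
  have hle : ∀ s, |armaCoeff φ₁ θ₁ (m + s)| ≤ 2 * c ^ m * c ^ s := fun s => by
    have := arma_abs_le c φ₁ θ₁ hc0 h1 h2 (m + s) (by omega)
    rwa [pow_add, ← mul_assoc] at this
  rw [← hg.tsum_eq]
  exact (Summable.of_nonneg_of_le (fun _ => abs_nonneg _) hle hg.summable).tsum_le_tsum hle hg.summable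

theorem arma_double (c φ₁ θ₁ : ℝ) (hc0 : 0 < c) (hc1 : c < 1) (h1 : |φ₁| ≤ c) (h2 : |θ₁| ≤ c)
    (n : ℕ) (hn : 1 ≤ n) :
    (∑' u : ℕ, ∑' s : ℕ, |armaCoeff φ₁ θ₁ (n + u + s)|) ≤ 2 / (1 - c) ^ 2 * c ^ n := by
  have hg := (hasSum_geometric_of_lt_one hc0.le hc1).mul_left (2 * c ^ n * (1 - c)⁻¹)
  have hle : ∀ u, (∑' s : ℕ, |armaCoeff φ₁ θ₁ (n + u + s)|) ≤ 2 * c ^ n * (1 - c)⁻¹ * c ^ u := fun u => by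
    refine (arma_tail c φ₁ θ₁ hc0 hc1 h1 h2 (n + u) (by omega)).trans (le_of_eq ?_)
    rw [pow_add]; ring
  have e : 2 / (1 - c) ^ 2 * c ^ n = 2 * c ^ n * (1 - c)⁻¹ * (1 - c)⁻¹ := by
    rw [div_eq_mul_inv, ← inv_pow]; ring
  rw [e, ← hg.tsum_eq]
  exact (Summable.of_nonneg_of_le (fun _ => tsum_nonneg fun _ => abs_nonneg _) hle
    hg.summable).tsum_le_tsum hle hg.summable

theorem arma_ne_zero (c φ₁ θ₁ : ℝ) (hc1 : c < 1) (h1 : |φ₁| ≤ c) (h2 : |θ₁| ≤ c)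
    (z : ℂ) (hz : ‖z‖ ≤ 1) : (∑' s : ℕ, (armaCoeff φ₁ θ₁ s : ℂ) * z ^ s) ≠ 0 := by
  have key : ∀ x : ℝ, |x| ≤ c → ‖(x : ℂ) * z‖ < 1 := fun x hx => by
    rw [norm_mul, Complex.norm_real, Real.norm_eq_abs]
    nlinarith [abs_nonneg x, norm_nonneg z]
  have hg := (hasSum_geometric_of_norm_lt_one (key φ₁ h1)).mul_left (((φ₁ : ℂ) + θ₁) * z)
  have hs : HasSum (fun s : ℕ => (armaCoeff φ₁ θ₁ (s + 1) : ℂ) * z ^ (s + 1))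
      (((φ₁ : ℂ) + θ₁) * z * (1 - φ₁ * z)⁻¹) := by
    have e : (fun s : ℕ => (armaCoeff φ₁ θ₁ (s + 1) : ℂ) * z ^ (s + 1))
        = fun s : ℕ => ((φ₁ : ℂ) + θ₁) * z * ((φ₁ : ℂ) * z) ^ s := by
      funext s
      simp [armaCoeff]
      ring
    rw [e]
    exact hg
  have hs' := (hasSum_nat_add_iff (f := fun s : ℕ => (armaCoeff φ₁ θ₁ s : ℂ) * z ^ s) 1).1 hs
  rw [hs'.tsum_eq]
  have hne : ∀ w : ℂ, ‖w‖ < 1 → 1 - w ≠ 0 := fun w hw h => by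
    rw [← sub_eq_zero.1 h] at hw
    simp at hw
  have n1 := hne _ (key φ₁ h1)
  have n2 := hne _ (key (-θ₁) (by rwa [abs_neg]))
  have e : ((φ₁ : ℂ) + θ₁) * z * (1 - φ₁ * z)⁻¹ +
      ∑ s ∈ Finset.range 1, (armaCoeff φ₁ θ₁ s : ℂ) * z ^ s
      = (1 - ((-θ₁ : ℝ) : ℂ) * z) / (1 - φ₁ * z) := by
    simp [armaCoeff]
    field_simp
    ring
  rw [e]
  exact div_ne_zero n2 n1

theorem arma_recip (c φ₁ θ₁ : ℝ) (hc0 : 0 < c) (hc1 : c < 1) (h1 : |φ₁| ≤ c) (h2 : |θ₁| ≤ c)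
    (b : ℕ → ℝ)
    (hb : ∀ n : ℕ, (∑ i ∈ Finset.range (n + 1), armaCoeff φ₁ θ₁ i * b (n - i)) =
        if n = 0 then 1 else 0) :
    Summable (fun s => |b s|) ∧ (∑' s : ℕ, |b s|) ≤ 1 + 2 * c / (1 - c) := by
  have b0 : b 0 = 1 := by simpa [armaCoeff] using hb 0
  have rec' : ∀ n, b (n + 1) = - θ₁ * b n - φ₁ * (if n = 0 then 1 else 0) := fun n => by
    have e := hb (n + 1)
    rw [Finset.sum_range_succ'] at e
    have e2 : ∑ i ∈ Finset.range (n + 1), armaCoeff φ₁ θ₁ (i + 1) * b (n + 1 - (i + 1))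
        = φ₁ * (∑ i ∈ Finset.range (n + 1), armaCoeff φ₁ θ₁ i * b (n - i)) + θ₁ * b n := by
      rw [Finset.sum_range_succ', Finset.sum_range_succ' _ n, mul_add, Finset.mul_sum, add_assoc]
      congr 1
      · refine Finset.sum_congr rfl fun i _ => ?_
        simp [armaCoeff, pow_succ]
        ring
      · simp [armaCoeff]
        ring
    rw [e2, hb n] at e
    simp [armaCoeff] at e ⊢
    linarith
  have hle : ∀ n, |b (n + 1)| ≤ 2 * c * c ^ n := fun n => by
    induction n with
    | zero =>
      rw [rec' 0, b0]
      simp only [if_true, mul_one, pow_zero]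
      rw [abs_le] at *
      constructor <;> linarith
    | succ n ih =>
      rw [rec' (n + 1)]
      simp only [Nat.add_eq_zero_iff, one_ne_zero, and_false, if_false, mul_zero, sub_zero]
      rw [abs_mul, abs_neg]
      calc |θ₁| * |b (n + 1)| ≤ c * (2 * c * c ^ n) := by gcongr
        _ = 2 * c * c ^ (n + 1) := by ring
  have hg := (hasSum_geometric_of_lt_one hc0.le hc1).mul_left (2 * c)
  have hs1 : Summable (fun s => |b (s + 1)|) :=
    Summable.of_nonneg_of_le (fun _ => abs_nonneg _) hle hg.summable
  have hs : Summable (fun s => |b s|) := (summable_nat_add_iff (f := fun s => |b s|) 1).1 hs1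
  refine ⟨hs, ?_⟩
  rw [hs.tsum_eq_zero_add, b0, abs_one, div_eq_mul_inv, ← hg.tsum_eq]
  gcongr
  · exact hg.summable
  · exact hle _

/-- **Uniform bounds for ARMA(1,1) coefficient classes** (Example 3.8): fix `0 < c < 1`
and let `A'_c` consist of the MA(∞) coefficient sequences of ARMA(1,1) processes with
`|φ₁|, |θ₁| ≤ c` and `φ₁ ≠ −θ₁`.  Then (i) the associated power series have no zero in the
closed unit disc, (ii) the double tail sums are bounded by `(2/(1−c)²) c^n`, uniformly over
`A'_c`, and (iii) the absolute sums of the reciprocal power series coefficients are bounded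
by `1 + 2c/(1−c)`, uniformly over `A'_c`. -/
theorem arma_class_uniform_bounds
    (c : ℝ) (hc0 : 0 < c) (hc1 : c < 1)
    -- the reciprocal power series coefficients b_s(a) for a ∈ A'_c
    (b : ℝ → ℝ → ℕ → ℝ)
    (hb : ∀ φ₁ θ₁ : ℝ, |φ₁| ≤ c → |θ₁| ≤ c → φ₁ ≠ -θ₁ → ∀ n : ℕ,
      (∑ i ∈ Finset.range (n + 1), armaCoeff φ₁ θ₁ i * b φ₁ θ₁ (n - i)) =
        if n = 0 then 1 else 0) :
    -- (i)
    (∀ φ₁ θ₁ : ℝ, |φ₁| ≤ c → |θ₁| ≤ c → φ₁ ≠ -θ₁ →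
      ∀ z : ℂ, ‖z‖ ≤ 1 → (∑' s : ℕ, (armaCoeff φ₁ θ₁ s : ℂ) * z ^ s) ≠ 0) ∧
    -- (ii)
    (∀ n : ℕ, 1 ≤ n → ∀ φ₁ θ₁ : ℝ, |φ₁| ≤ c → |θ₁| ≤ c → φ₁ ≠ -θ₁ →
      (∑' u : ℕ, ∑' s : ℕ, |armaCoeff φ₁ θ₁ (n + u + s)|) ≤ 2 / (1 - c) ^ 2 * c ^ n) ∧
    -- (iii)
    (∀ φ₁ θ₁ : ℝ, |φ₁| ≤ c → |θ₁| ≤ c → φ₁ ≠ -θ₁ →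
      Summable (fun s => |b φ₁ θ₁ s|) ∧ (∑' s : ℕ, |b φ₁ θ₁ s|) ≤ 1 + 2 * c / (1 - c)) := by
  refine ⟨fun φ₁ θ₁ h1 h2 _ z hz => arma_ne_zero c φ₁ θ₁ hc1 h1 h2 z hz,
    fun n hn φ₁ θ₁ h1 h2 _ => arma_double c φ₁ θ₁ hc0 hc1 h1 h2 n hn,
    fun φ₁ θ₁ h1 h2 h3 => arma_recip c φ₁ θ₁ hc0 hc1 h1 h2 _ (hb φ₁ θ₁ h1 h2 h3)⟩
end

section
/- Let φ : ℝ → [1,∞) be a u-shaped function and μ a probability measure on ℝ with distribution function F_μ and leftcontinuous quantile function F_μ^←. Define w(t) := φ(F_μ^←(t)) 1_{[0,F_μ(0)]}(t) for t ∈ [0,1], let w^→(y) := sup{s ∈ [0,1] : w(s) > y} (sup ∅ := 0) be its rightcontinuous inverse, and let φ^→(y) := sup{z ∈ (−∞,0] : φ(z) > y} (sup ∅ := 0) be the rightcontinuous inverse of the nonincreasing restriction of φ to (−∞,0]. Then w^→(y) ≤ F_μ(φ^→(y)) for every y ∈ (0,∞), and for every K > 0: ∫_K^∞ w^→(y) dy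 ≤ ∫_{(−∞,0]} φ(z) 1_{φ(z)≥K} μ(dz). -/
open MeasureTheory Filter Topology

/-- The leftcontinuous inverse (lower quantile function) `F_μ^←(t) = inf {y : F_μ(y) ≥ t}`. -/
noncomputable def quantileFun (μ : Measure ℝ) (t : ℝ) : ℝ :=
  sInf {y : ℝ | t ≤ cdfR μ y}

/-- `w_μ(t) = φ(F_μ^←(t)) 1_{[0, F_μ(0)]}(t)`. -/
noncomputable def wFun (φ : ℝ → ℝ) (μ : Measure ℝ) : ℝ → ℝ :=
  Set.indicator (Set.Icc 0 (cdfR μ 0)) fun t => φ (quantileFun μ t)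

/-- The rightcontinuous inverse `w^→(y) = sup {s ∈ [0,1] : w(s) > y}` (with `sup ∅ = 0`). -/
noncomputable def wInv (φ : ℝ → ℝ) (μ : Measure ℝ) (y : ℝ) : ℝ :=
  sSup {s : ℝ | s ∈ Set.Icc (0 : ℝ) 1 ∧ y < wFun φ μ s}

/-- The rightcontinuous inverse `φ^→(y) = sup {z ∈ (−∞,0] : φ(z) > y}` (with `sup ∅ = 0`)
of the nonincreasing restriction of `φ` to `(−∞,0]`. -/
noncomputable def phiInv (φ : ℝ → ℝ) (y : ℝ) : ℝ :=
  sSup {z : ℝ | z ≤ 0 ∧ y < φ z}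

/-- `φ` is antitone on `(-∞, 0]`, by continuity. -/
lemma antitoneOn_Iic_aux {φ : ℝ → ℝ} (hφc : Continuous φ)
    (hφdec : AntitoneOn φ (Set.Iio 0)) : AntitoneOn φ (Set.Iic 0) := by
  intro a ha b hb hab
  have hb' : b ≤ 0 := hb
  rcases hb'.lt_or_eq with hlt | rfl
  · exact hφdec (hab.trans_lt hlt) hlt hab
  rcases hab.lt_or_eq with halt | rfl
  · have hc : Tendsto φ (𝓝[<] (0 : ℝ)) (𝓝 (φ 0)) := hφc.continuousAt.tendsto.mono_left
      nhdsWithin_le_nhds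
    refine le_of_tendsto hc ?_
    filter_upwards [Ioo_mem_nhdsLT halt] with z hz
    exact hφdec halt hz.2 hz.1.le
  · exact le_rfl

lemma cdfR_eq_aux (μ : Measure ℝ) [IsProbabilityMeasure μ] (y : ℝ) :
    cdfR μ y = ProbabilityTheory.cdf μ y := by
  rw [ProbabilityTheory.cdf_eq_real]; rfl

lemma bddBelow_aux (μ : Measure ℝ) [IsProbabilityMeasure μ] {t : ℝ} (ht : 0 < t) :
    BddBelow {y : ℝ | t ≤ cdfR μ y} := by
  have h := (ProbabilityTheory.tendsto_cdf_atBot μ).eventually (gt_mem_nhds ht)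
  obtain ⟨b, hb⟩ := h.exists
  refine ⟨b, fun y hy => ?_⟩
  by_contra hlt
  have h1 := ProbabilityTheory.monotone_cdf μ (le_of_lt (not_le.mp hlt))
  have h2 : t ≤ cdfR μ y := hy
  rw [cdfR_eq_aux] at h2
  linarith

lemma le_cdfR_quantile_aux (μ : Measure ℝ) [IsProbabilityMeasure μ] {t x : ℝ}
    (hx : t ≤ cdfR μ x) : t ≤ cdfR μ (quantileFun μ t) := by
  have hne : {y : ℝ | t ≤ cdfR μ y}.Nonempty := ⟨x, hx⟩
  rw [cdfR_eq_aux]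
  have hc : Tendsto (ProbabilityTheory.cdf μ) (𝓝[>] (quantileFun μ t))
      (𝓝 (ProbabilityTheory.cdf μ (quantileFun μ t))) :=
    ((ProbabilityTheory.cdf μ).right_continuous _).tendsto.mono_left
      (nhdsWithin_mono _ Set.Ioi_subset_Ici_self)
  refine ge_of_tendsto hc ?_
  filter_upwards [self_mem_nhdsWithin] with z hz
  obtain ⟨y, hy, hyz⟩ := exists_lt_of_csInf_lt hne hz
  have h2 : t ≤ cdfR μ y := hy
  rw [cdfR_eq_aux] at h2
  exact h2.trans (ProbabilityTheory.monotone_cdf μ hyz.le)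

lemma wInv_eq_aux {φ : ℝ → ℝ} (hφc : Continuous φ)
    (hφdec : AntitoneOn φ (Set.Iio 0))
    (μ : Measure ℝ) [IsProbabilityMeasure μ] {y : ℝ} (hy : 0 < y) :
    wInv φ μ y = μ.real {z : ℝ | z ≤ 0 ∧ y < φ z} := by
  have hanti := antitoneOn_Iic_aux hφc hφdec
  apply le_antisymm
  · refine Real.sSup_le ?_ measureReal_nonneg
    rintro s ⟨⟨hs0, hs1⟩, hw⟩
    rcases hs0.eq_or_lt with rfl | hpos
    · exact measureReal_nonneg
    have hmem : s ∈ Set.Icc 0 (cdfR μ 0) := by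
      by_contra hn
      rw [wFun, Set.indicator_of_notMem hn] at hw
      linarith
    rw [wFun, Set.indicator_of_mem hmem] at hw
    have hq0 : quantileFun μ s ≤ 0 := csInf_le (bddBelow_aux μ hpos) hmem.2
    refine (le_cdfR_quantile_aux μ hmem.2).trans ?_
    refine measureReal_mono (μ := μ) (fun z hz => ?_)
    have hz' : z ≤ quantileFun μ s := hz
    exact ⟨hz'.trans hq0, hw.trans_le (hanti (hz'.trans hq0) hq0 hz')⟩
  · have hw0 : 0 ≤ wInv φ μ y := Real.sSup_nonneg (fun s hs => hs.1.1)
    have key : ∀ x, x ≤ 0 → y < φ x → μ.real (Set.Iic x) ≤ wInv φ μ y := by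
      intro x hx hyx
      rcases (measureReal_nonneg (μ := μ) (s := Set.Iic x)).eq_or_lt with h0 | hpos
      · rw [← h0]; exact hw0
      refine le_csSup ⟨1, fun s hs => hs.1.2⟩ ⟨⟨hpos.le, measureReal_le_one⟩, ?_⟩
      have hm : μ.real (Set.Iic x) ∈ Set.Icc 0 (cdfR μ 0) :=
        ⟨hpos.le, measureReal_mono (μ := μ) (Set.Iic_subset_Iic.mpr hx)⟩
      rw [wFun, Set.indicator_of_mem hm]
      have hq : quantileFun μ (μ.real (Set.Iic x)) ≤ x :=
        csInf_le (bddBelow_aux μ hpos) (le_refl (μ.real (Set.Iic x)))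
      exact hyx.trans_le (hanti (hq.trans hx) hx hq)
    by_contra hlt
    push Not at hlt
    have hmeas : MeasurableSet {z : ℝ | z ≤ 0 ∧ y < φ z} :=
      measurableSet_Iic.inter (measurableSet_lt measurable_const hφc.measurable)
    have hlt' : ENNReal.ofReal (wInv φ μ y) < μ {z : ℝ | z ≤ 0 ∧ y < φ z} := by
      rw [ENNReal.ofReal_lt_iff_lt_toReal hw0 (measure_ne_top _ _)]
      exact hlt
    obtain ⟨C, hCs, hC, hCl⟩ := hmeas.exists_lt_isCompact hlt'
    have hne : C.Nonempty := by
      rw [Set.nonempty_iff_ne_empty]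
      rintro rfl
      simp at hCl
    obtain ⟨x, hxC, hx⟩ := hC.exists_isGreatest hne
    have h1 := key x (hCs hxC).1 (hCs hxC).2
    have h2 : μ C ≤ μ (Set.Iic x) := measure_mono (fun z hz => hx hz)
    have h3 := hCl.trans_le h2
    rw [ENNReal.ofReal_lt_iff_lt_toReal hw0 (measure_ne_top _ _)] at h3
    exact absurd h1 (not_le.mpr h3)

lemma lintegral_shift_aux (f : ℝ → ENNReal) (K : ℝ) :
    ∫⁻ y in Set.Ioi K, f y = ∫⁻ t in Set.Ioi (0 : ℝ), f (t + K) := by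
  rw [← lintegral_indicator measurableSet_Ioi, ← lintegral_indicator measurableSet_Ioi,
    ← lintegral_add_right_eq_self _ K]
  congr 1
  ext t
  simp [Set.indicator]

/-- **Tail bound for the inverse of `w`** (Step 2 of the proof of Theorem 3.1):
`w^→(y) ≤ F_μ(φ^→(y))` for all `y > 0`, and
`∫_K^∞ w^→(y) dy ≤ ∫_{(−∞,0]} φ 1_{φ≥K} dμ` for every `K > 0`. -/
theorem wInv_le_and_tail_integral_bound
    (φ : ℝ → ℝ) (hφc : Continuous φ) (hφ1 : ∀ y : ℝ, 1 ≤ φ y)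
    (hφdec : AntitoneOn φ (Set.Iio 0)) (hφinc : MonotoneOn φ (Set.Ioi 0))
    (μ : Measure ℝ) [IsProbabilityMeasure μ] :
    (∀ y : ℝ, 0 < y → wInv φ μ y ≤ cdfR μ (phiInv φ y)) ∧
    ∀ K : ℝ, 0 < K →
      (∫ y in Set.Ioi K, wInv φ μ y) ≤
        ∫ z, Set.indicator {z' : ℝ | z' ≤ 0 ∧ K ≤ φ z'} φ z ∂μ := by
  refine ⟨fun y hy => ?_, fun K hK => ?_⟩
  · rw [wInv_eq_aux hφc hφdec μ hy]
    refine measureReal_mono (μ := μ) (fun z hz => ?_)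
    exact le_csSup ⟨0, fun _ h => h.1⟩ hz
  · have hBm : MeasurableSet {z' : ℝ | z' ≤ 0 ∧ K ≤ φ z'} :=
      measurableSet_Iic.inter (measurableSet_le measurable_const hφc.measurable)
    have hpos : ∀ z, 0 < φ z := fun z => lt_of_lt_of_le one_pos (hφ1 z)
    set G : ℝ → ℝ := Set.indicator {z' : ℝ | z' ≤ 0 ∧ K ≤ φ z'} φ with hG
    set g : ℝ → ℝ := Set.indicator {z' : ℝ | z' ≤ 0 ∧ K ≤ φ z'} (fun z => φ z - K) with hg
    have hGm : Measurable G := hφc.measurable.indicator hBm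
    have hgm : Measurable g := (hφc.measurable.sub_const K).indicator hBm
    have hG0 : ∀ z, 0 ≤ G z := fun z => Set.indicator_nonneg (fun z _ => (hpos z).le) z
    have hg0 : ∀ z, 0 ≤ g z :=
      fun z => Set.indicator_nonneg (fun z hz => sub_nonneg.mpr hz.2) z
    have hgG : ∀ z, g z ≤ G z := fun z =>
      Set.indicator_le_indicator (by linarith)
    have hGg : ∀ z, G z ≤ g z + K := by
      intro z
      by_cases hz : z ∈ {z' : ℝ | z' ≤ 0 ∧ K ≤ φ z'}
      · rw [hG, hg, Set.indicator_of_mem hz, Set.indicator_of_mem hz]; linarith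
      · rw [hG, hg, Set.indicator_of_notMem hz, Set.indicator_of_notMem hz]; linarith
    have hR : ∫ z, G z ∂μ = (∫⁻ z, ENNReal.ofReal (G z) ∂μ).toReal :=
      integral_eq_lintegral_of_nonneg_ae (ae_of_all _ hG0) hGm.aestronglyMeasurable
    have hanti : Antitone (fun y => μ.real {z : ℝ | z ≤ 0 ∧ y < φ z}) := fun a b hab =>
      measureReal_mono (fun z hz => ⟨hz.1, hab.trans_lt hz.2⟩)
    have hL : ∫ y in Set.Ioi K, wInv φ μ y = (∫⁻ z, ENNReal.ofReal (g z) ∂μ).toReal := by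
      rw [setIntegral_congr_fun measurableSet_Ioi
        (fun y hy => wInv_eq_aux hφc hφdec μ (hK.trans hy)),
        integral_eq_lintegral_of_nonneg_ae (ae_of_all _ fun _ => measureReal_nonneg)
          hanti.measurable.aestronglyMeasurable, lintegral_shift_aux,
        lintegral_eq_lintegral_meas_lt μ (ae_of_all _ hg0) hgm.aemeasurable]
      congr 1
      refine setLIntegral_congr_fun measurableSet_Ioi (fun t ht => ?_)
      have ht' : 0 < t := ht
      have hfin : ENNReal.ofReal (μ.real {z : ℝ | z ≤ 0 ∧ t + K < φ z})
          = μ {z : ℝ | z ≤ 0 ∧ t + K < φ z} := ofReal_measureReal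
      refine hfin.trans ?_
      congr 1
      ext z
      simp only [Set.mem_setOf_eq, hg, Set.indicator]
      split_ifs with h
      · constructor
        · rintro ⟨_, h2⟩; linarith
        · intro h2; exact ⟨h.1, by linarith⟩
      · constructor
        · rintro ⟨h1, h2⟩; exact absurd ⟨h1, by linarith⟩ h
        · intro h2; linarith
    rw [hR, hL]
    by_cases htop : ∫⁻ z, ENNReal.ofReal (G z) ∂μ = ⊤
    · have hle : ∫⁻ z, ENNReal.ofReal (G z) ∂μ
          ≤ ∫⁻ z, ENNReal.ofReal (g z) ∂μ + ENNReal.ofReal K := by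
        calc ∫⁻ z, ENNReal.ofReal (G z) ∂μ
            ≤ ∫⁻ z, (ENNReal.ofReal (g z) + ENNReal.ofReal K) ∂μ :=
              lintegral_mono fun z =>
                (ENNReal.ofReal_le_ofReal (hGg z)).trans ENNReal.ofReal_add_le
          _ = _ := by rw [lintegral_add_right _ measurable_const]; simp
      rw [htop, top_le_iff, ENNReal.add_eq_top] at hle
      rcases hle with h | h
      · rw [h, htop]
      · exact absurd h ENNReal.ofReal_ne_top
    · exact ENNReal.toReal_mono htop
        (lintegral_mono fun z => ENNReal.ofReal_le_ofReal (hgG z))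
end
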